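/- (Exterior solvability with decay for linear elasticity.) Let d ≥ 2, N ≥ 1, and let ℂ = (ℂ_{iajb}) ∈ ℝ^{N×d×N×d} satisfy the symmetry ℂ_{iajb} = ℂ_{jbia} and the Legendre–Hadamard condition ∑_{i,a,j,b} ℂ_{iajb} ξ_i η_a ξ_j η_b ≥ c₀|ξ|²|η|² for all ξ ∈ ℝ^N, η ∈ ℝ^d, with some c₀ > 0. Let p, α ∈ ℕ₀, R₀ > 0, and let f ∈ C^∞(ℝ^d∖B_{R₀/2}(0); ℝ^N) satisfy, for every j ∈ ℕ₀, |∇^j f(x)| ≤ C_j⟨x⟩^{−d−p−j}(log⟨x⟩)^α for all |x| ≥ R₀/2. Then there exist u ∈ C^∞(ℝ^d∖B_{R₀}(0); ℝ^N) and constants C̃_j such that −∑_{a,b,j} ℂ_{iajb} ∂_a∂_b u_j(x) = f_i(x) for all x with |x| ≥ R₀ and all i, and for every j ≥ 1, |∇^j u(x)| ≤ C̃_j⟨x⟩^{2−d−p−j}(log⟨x⟩)^{α+1} for all |x| ≥ R₀. -/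

import Mathlib

noncomputable section

open scoped BigOperators
open MeasureTheory Filter Topology

namespace Defect

abbrev Vec (n : ℕ) : Type := Fin n → ℝ

/-- Euclidean norm of a vector in `ℝ^n`. -/
def enorm {n : ℕ} (v : Vec n) : ℝ := Real.sqrt (∑ i, (v i) ^ 2)

/-- `⟨x⟩ := |x| + 2`. -/
def ang {n : ℕ} (v : Vec n) : ℝ := enorm v + 2

def dotV {n : ℕ} (x y : Vec n) : ℝ := ∑ i, x i * y i

/-- Matrix-vector product for a plain `Fin N → Fin N → ℝ` matrix. -/
def mulV {N : ℕ} (M : Fin N → Fin N → ℝ) (v : Vec N) : Vec N := fun i => ∑ j, M i j * v j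

/-- Euclidean (Frobenius) norm of an `N × N` array. -/
def mnorm {N : ℕ} (M : Fin N → Fin N → ℝ) : ℝ := Real.sqrt (∑ i, ∑ j, (M i j) ^ 2)

/-- The lattice point `A z` for `z ∈ ℤ^d`. -/
def latticePt (d : ℕ) (A : Matrix (Fin d) (Fin d) ℝ) (z : Fin d → ℤ) : Vec d :=
  fun i => ∑ j, A i j * (z j : ℝ)

/-- The Bravais lattice `Λ = A ℤ^d`. -/
def Lattice (d : ℕ) (A : Matrix (Fin d) (Fin d) ℝ) : Set (Vec d) :=
  Set.range (latticePt d A)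

/-- First-order finite difference `D_ρ u (ℓ) = u(ℓ+ρ) - u(ℓ)`. -/
def D1 {d : ℕ} {M : Type} [AddCommGroup M] (ρ : Vec d) (u : Vec d → M) (ℓ : Vec d) : M :=
  u (ℓ + ρ) - u ℓ

/-- Iterated finite difference `D_{ρ₁} ⋯ D_{ρ_j} u (ℓ)` (closed form). -/
def Dmulti {d : ℕ} {M : Type} [AddCommGroup M] [Module ℝ M] {j : ℕ}
    (ρs : Fin j → Vec d) (u : Vec d → M) (ℓ : Vec d) : M :=
  ∑ S : Finset (Fin j), ((-1 : ℝ) ^ (j - S.card)) • u (ℓ + ∑ i ∈ S, ρs i)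

/-- `|Du(ℓ)|²`, the squared Euclidean norm of the stencil of first differences. -/
def Dnorm1Sq {d N : ℕ} (R : Finset (Vec d)) (u : Vec d → Vec N) (ℓ : Vec d) : ℝ :=
  ∑ ρ ∈ R, (enorm (D1 ρ u ℓ)) ^ 2

/-- `|D^j u(ℓ)|`, the Euclidean norm of the array `(D_{ρ⃗} u(ℓ))_{ρ⃗ ∈ R^j}`. -/
def DnormJ {d N : ℕ} (R : Finset (Vec d)) (j : ℕ) (u : Vec d → Vec N) (ℓ : Vec d) : ℝ :=
  Real.sqrt (∑ ρs : Fin j → {x // x ∈ R},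
    (enorm (Dmulti (fun i => (ρs i : Vec d)) u ℓ)) ^ 2)

/-- The linearized lattice operator
`H[u](ℓ) = ∑_{σ,ρ∈R} (C_{σρ} D_ρ u(ℓ-σ) - C_{σρ} D_ρ u(ℓ))`. -/
def Hop (d N : ℕ) (R : Finset (Vec d)) (C : Vec d → Vec d → Fin N → Fin N → ℝ)
    (u : Vec d → Vec N) (ℓ : Vec d) : Vec N :=
  ∑ σ ∈ R, ∑ ρ ∈ R, (mulV (C σ ρ) (D1 ρ u (ℓ - σ)) - mulV (C σ ρ) (D1 ρ u ℓ))

/-- `u ∈ 𝓗¹`. -/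
def InH1 {d N : ℕ} (A : Matrix (Fin d) (Fin d) ℝ) (R : Finset (Vec d))
    (u : Vec d → Vec N) : Prop :=
  Summable fun z : Fin d → ℤ => Dnorm1Sq R u (latticePt d A z)

/-- `u ∈ 𝓗ᶜ` : the stencil `Du` has bounded support on the lattice. -/
def InHc {d N : ℕ} (A : Matrix (Fin d) (Fin d) ℝ) (R : Finset (Vec d))
    (u : Vec d → Vec N) : Prop :=
  ∃ rad : ℝ, ∀ z : Fin d → ℤ, rad ≤ enorm (latticePt d A z) →
    ∀ ρ ∈ R, D1 ρ u (latticePt d A z) = 0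

/-- Stability of the lattice operator `H`. -/
def IsStable (d N : ℕ) (A : Matrix (Fin d) (Fin d) ℝ) (R : Finset (Vec d))
    (C : Vec d → Vec d → Fin N → Fin N → ℝ) : Prop :=
  ∃ c₀ : ℝ, 0 < c₀ ∧ ∀ u : Vec d → Vec N, InHc A R u →
    c₀ * (∑' z : Fin d → ℤ, Dnorm1Sq R u (latticePt d A z)) ≤
      ∑' z : Fin d → ℤ, ∑ σ ∈ R, ∑ ρ ∈ R,
        dotV (D1 σ u (latticePt d A z)) (mulV (C σ ρ) (D1 ρ u (latticePt d A z)))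

/-- `k`-th column of a matrix-valued function. -/
def col {d N : ℕ} (G : Vec d → Fin N → Fin N → ℝ) (k : Fin N) : Vec d → Vec N :=
  fun x i => G x i k

/-- `|D^j 𝒢(ℓ)|` for matrix-valued `𝒢`. -/
def DnormJmat {d N : ℕ} (R : Finset (Vec d)) (j : ℕ)
    (G : Vec d → Fin N → Fin N → ℝ) (ℓ : Vec d) : ℝ :=
  Real.sqrt (∑ k : Fin N, (DnormJ R j (col G k) ℓ) ^ 2)

/-- `𝒢` is a lattice Green's function for `H`. -/
def IsLatticeGreen (d N : ℕ) (A : Matrix (Fin d) (Fin d) ℝ) (R : Finset (Vec d))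
    (C : Vec d → Vec d → Fin N → Fin N → ℝ) (G : Vec d → Fin N → Fin N → ℝ) : Prop :=
  (∀ (k : Fin N) (z : Fin d → ℤ),
      Hop d N R C (col G k) (latticePt d A z) =
        if latticePt d A z = 0 then Pi.single k 1 else 0) ∧
  (∀ j : ℕ, 1 ≤ j → ∃ cj : ℝ, ∀ z : Fin d → ℤ,
      DnormJmat R j G (latticePt d A z) ≤
        cj * ang (latticePt d A z) ^ ((2 : ℝ) - d - j))

/-- A symmetric array `b ∈ (ℝ^{Fin d})^{⊙ i}`. -/
def SymArr {d i : ℕ} (b : (Fin i → Fin d) → ℝ) : Prop :=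
  ∀ (π : Equiv.Perm (Fin i)) (σv : Fin i → Fin d), b (σv ∘ π) = b σv

/-- `b : D_𝒮^i f`, a multipole term built from the basis `s`. -/
def multipole (d N : ℕ) (s : Fin d → Vec d) (i : ℕ) (b : (Fin i → Fin d) → ℝ)
    (f : Vec d → Vec N) : Vec d → Vec N :=
  fun ℓ => ∑ σv : Fin i → Fin d, b σv • Dmulti (fun m => s (σv m)) f ℓ

/-- Iterated partial derivative `∂_{j₁} ⋯ ∂_{j_i} f (x)`. -/
def pderivMulti {d : ℕ} (i : ℕ) (js : Fin i → Fin d) (f : Vec d → ℝ) (x : Vec d) : ℝ :=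
  iteratedFDeriv ℝ i f x (fun m => Pi.single (js m) (1 : ℝ))

/-- `a : ∇^i f (x)` for a tensor `a ∈ (ℝ^d)^{⊗ i}`. -/
def aContract {d : ℕ} (i : ℕ) (a : (Fin i → Fin d) → ℝ) (f : Vec d → ℝ) (x : Vec d) : ℝ :=
  ∑ js : Fin i → Fin d, a js * pderivMulti i js f x

/-- Elementary tensor `σ⃗^⊗` as an array. -/
def tensorPow {d k : ℕ} (σs : Fin k → Vec d) : (Fin k → Fin d) → ℝ :=
  fun js => ∏ m, σs m (js m)

/-- Symmetric tensor product `σ⃗^⊙`. -/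
def symTensor {d k : ℕ} (σs : Fin k → Vec d) : (Fin k → Fin d) → ℝ :=
  fun js => ((k.factorial : ℝ))⁻¹ * ∑ π : Equiv.Perm (Fin k), tensorPow (σs ∘ π) js

/-- A symmetric tensor (array invariant under index permutations). -/
def SymTensor {d k : ℕ} (T : (Fin k → Fin d) → ℝ) : Prop :=
  ∀ (π : Equiv.Perm (Fin k)) (js : Fin k → Fin d), T (js ∘ π) = T js

/-- `∂V/∂g_ρ (gs)` as a vector in `ℝ^N`. -/
def gradV {d N : ℕ} (R : Finset (Vec d)) (V : ({x // x ∈ R} → Vec N) → ℝ)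
    (ρ : {x // x ∈ R}) (gs : {x // x ∈ R} → Vec N) : Vec N :=
  fun i => fderiv ℝ V gs (Pi.single ρ (Pi.single i 1))

/-- The finite-difference stencil `Du(ℓ) = (D_ρ u(ℓ))_{ρ ∈ R}`. -/
def Dstencil {d N : ℕ} (R : Finset (Vec d)) (u : Vec d → Vec N) (ℓ : Vec d) :
    {x // x ∈ R} → Vec N :=
  fun ρ => D1 (ρ : Vec d) u ℓ

/-- `C_{σρ} = ∂²V/∂g_σ ∂g_ρ (0)`. -/
def CofV {d N : ℕ} (R : Finset (Vec d)) (V : ({x // x ∈ R} → Vec N) → ℝ)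
    (σ ρ : Vec d) (i j : Fin N) : ℝ :=
  if hσ : σ ∈ R then
    if hρ : ρ ∈ R then
      iteratedFDeriv ℝ 2 V 0
        ![Pi.single ⟨σ, hσ⟩ (Pi.single i 1), Pi.single ⟨ρ, hρ⟩ (Pi.single j 1)]
    else 0
  else 0

/-- Summand of the first variation `δE(u)[v]` at a site. -/
def deltaEsite {d N : ℕ} (R : Finset (Vec d)) (V : ({x // x ∈ R} → Vec N) → ℝ)
    (u v : Vec d → Vec N) (ℓ : Vec d) : ℝ :=
  ∑ ρ ∈ R.attach, dotV (gradV R V ρ (Dstencil R u ℓ)) (D1 (ρ : Vec d) v ℓ)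

/-- The pointwise atomistic force `δE(u)(ℓ)`. -/
def deltaEpt {d N : ℕ} (R : Finset (Vec d)) (V : ({x // x ∈ R} → Vec N) → ℝ)
    (u : Vec d → Vec N) (ℓ : Vec d) : Vec N :=
  ∑ ρ ∈ R.attach,
    (gradV R V ρ (Dstencil R u (ℓ - (ρ : Vec d))) - gradV R V ρ (Dstencil R u ℓ))

/-- Point symmetry of the site potential. -/
def PointSym {d N : ℕ} (R : Finset (Vec d)) (hRsym : ∀ ρ ∈ R, -ρ ∈ R)
    (V : ({x // x ∈ R} → Vec N) → ℝ) : Prop :=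
  ∀ gs : {x // x ∈ R} → Vec N,
    V (fun ρ => -(gs ⟨-(ρ : Vec d), hRsym _ ρ.2⟩)) = V gs

/-- The Cauchy–Born elasticity tensor `ℂ_{iajb}`. -/
def CB {d N : ℕ} (A : Matrix (Fin d) (Fin d) ℝ) (R : Finset (Vec d))
    (C : Vec d → Vec d → Fin N → Fin N → ℝ)
    (i : Fin N) (a : Fin d) (j : Fin N) (b : Fin d) : ℝ :=
  (|A.det|)⁻¹ * ∑ ρ ∈ R, ∑ σ ∈ R, C ρ σ i j * ρ a * σ b

open scoped ContDiff InnerProductSpace SchwartzMap FourierTransform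

/-!
Cutting the inverse of the symbol off to a frequency annulus and inverting the Fourier transform
gives a Schwartz kernel `g` whose image under the operator is the difference of a function of
integral one and its own dilate. Under dyadic rescaling these differences telescope, so the sum over
all scales of the potentials with kernel `g`, each normalised to vanish at the origin, solves the
equation on the whole space for a compactly supported right-hand side.

A source decaying like `‖x‖ ^ (-d) * (log ‖x‖) ^ α` is cut into dyadic annuli. The first derivative
at `x` of the solution for one annulus is of order `‖x‖ ^ (1 - d)` for each of the about `log ‖x‖`
annuli inside the ball of radius `‖x‖`, whence the additional logarithm; the outer annuli contribute
a geometric series.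

Faster decay is reached by induction on `p`: away from the origin the source is a divergence
`∑ i, ∂ᵢ Fᵢ` of radial primitives `Fᵢ x = -xᵢ ∫ t in (1, ∞), t ^ (d - 1) * f (t x)`, which decay one
power less. Differentiating the solutions for `Fᵢ` and summing gives the solution for `f`, without a
further logarithm.
-/

section Calculus

variable {E F G : Type*} [NormedAddCommGroup E] [NormedSpace ℝ E]
  [NormedAddCommGroup F] [NormedSpace ℝ F] [NormedAddCommGroup G] [NormedSpace ℝ G]

theorem norm_iteratedFDeriv_clm_comp_le {f : E → F} (hf : ContDiff ℝ ∞ f) (L : F →L[ℝ] G)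
    (n : ℕ) (x : E) :
    ‖iteratedFDeriv ℝ n (fun y => L (f y)) x‖ ≤ ‖L‖ * ‖iteratedFDeriv ℝ n f x‖ :=
  L.norm_iteratedFDeriv_comp_left hf.contDiffAt (mod_cast le_top)

theorem norm_iteratedFDeriv_comp_smul {f : E → F} (hf : ContDiff ℝ ∞ f) (c : ℝ) (n : ℕ) (x : E) :
    ‖iteratedFDeriv ℝ n (fun y => f (c • y)) x‖ = |c| ^ n * ‖iteratedFDeriv ℝ n f (c • x)‖ := by
  rw [iteratedFDeriv_comp_const_smul c (hf.of_le (mod_cast le_top)), norm_smul, norm_pow,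
    Real.norm_eq_abs]

theorem norm_iteratedFDeriv_smul_le_of_scale {f : E → ℝ} {g : E → F} (hf : ContDiff ℝ ∞ f)
    (hg : ContDiff ℝ ∞ g) {x : E} {n : ℕ} {A B w : ℝ}
    (hfA : ∀ i ≤ n, ‖iteratedFDeriv ℝ i f x‖ ≤ A / w ^ i)
    (hgB : ∀ i ≤ n, ‖iteratedFDeriv ℝ i g x‖ ≤ B / w ^ i) :
    ‖iteratedFDeriv ℝ n (fun y => f y • g y) x‖ ≤ 2 ^ n * A * B / w ^ n := by
  have hterm : ∀ i ∈ Finset.range (n + 1), (n.choose i : ℝ) * ‖iteratedFDeriv ℝ i f x‖ *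
      ‖iteratedFDeriv ℝ (n - i) g x‖ ≤ (n.choose i : ℝ) * (A * B / w ^ n) := by
    intro i hi
    have hin : i ≤ n := Finset.mem_range_succ_iff.1 hi
    rw [mul_assoc]
    gcongr
    calc ‖iteratedFDeriv ℝ i f x‖ * ‖iteratedFDeriv ℝ (n - i) g x‖
        ≤ A / w ^ i * (B / w ^ (n - i)) :=
          mul_le_mul (hfA i hin) (hgB _ (Nat.sub_le _ _)) (norm_nonneg _)
            ((norm_nonneg _).trans (hfA i hin))
      _ = A * B / w ^ n := by rw [div_mul_div_comm, ← pow_add, Nat.add_sub_cancel' hin]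
  calc ‖iteratedFDeriv ℝ n (fun y => f y • g y) x‖
      ≤ ∑ i ∈ Finset.range (n + 1), (n.choose i : ℝ) * ‖iteratedFDeriv ℝ i f x‖ *
          ‖iteratedFDeriv ℝ (n - i) g x‖ :=
        norm_iteratedFDeriv_smul_le hf hg x (mod_cast le_top)
    _ ≤ ∑ i ∈ Finset.range (n + 1), (n.choose i : ℝ) * (A * B / w ^ n) :=
        Finset.sum_le_sum hterm
    _ = 2 ^ n * A * B / w ^ n := by
        rw [← Finset.sum_mul, ← Nat.cast_sum, Nat.sum_range_choose]
        push_cast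
        ring

end Calculus

section Series

variable {ι E F : Type*} [NormedAddCommGroup E] [NormedSpace ℝ E]
  [NormedAddCommGroup F] [NormedSpace ℝ F]

/-- A family of smooth functions which is summable at one point and whose derivatives, of every
positive order, are bounded uniformly in space by a summable sequence, so that the series may be
differentiated termwise indefinitely. The functions themselves need not be bounded. -/
structure IsDominatedSeries (f : ι → E → F) : Prop where
  contDiff : ∀ i, ContDiff ℝ ∞ (f i)
  exists_summable : ∃ x₀, Summable fun i => f i x₀
  exists_bound : ∀ n, ∃ b : ι → ℝ, Summable b ∧ ∀ i x, ‖iteratedFDeriv ℝ (n + 1) (f i) x‖ ≤ b i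

namespace IsDominatedSeries

variable [CompleteSpace F] {f : ι → E → F} (hf : IsDominatedSeries f)
include hf

theorem differentiable_tsum : Differentiable ℝ (fun x => ∑' i, f i x) := fun x => by
  obtain ⟨x₀, h₀⟩ := hf.exists_summable
  obtain ⟨b, hb, hfb⟩ := hf.exists_bound 0
  exact (hasFDerivAt_tsum hb
    (fun i y => ((hf.contDiff i).differentiable (by simp) y).hasFDerivAt)
    (fun i y => by simpa [norm_iteratedFDeriv_one] using hfb i y) h₀ x).differentiableAt

theorem fderiv_tsum_eq : fderiv ℝ (fun x => ∑' i, f i x) = fun x => ∑' i, fderiv ℝ (f i) x := by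
  obtain ⟨x₀, h₀⟩ := hf.exists_summable
  obtain ⟨b, hb, hfb⟩ := hf.exists_bound 0
  exact fderiv_tsum hb (fun i => (hf.contDiff i).differentiable (by simp))
    (fun i y => by simpa [norm_iteratedFDeriv_one] using hfb i y) h₀

theorem contDiff_tsum_fderiv_and_hasSum_iteratedFDeriv :
    ContDiff ℝ ∞ (fun x => ∑' i, fderiv ℝ (f i) x) ∧ ∀ n x,
      HasSum (fun i => iteratedFDeriv ℝ n (fderiv ℝ (f i)) x)
        (iteratedFDeriv ℝ n (fun x => ∑' i, fderiv ℝ (f i) x) x) := by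
  choose b hb hfb using hf.exists_bound
  have hsmooth : ∀ i, ContDiff ℝ ∞ (fderiv ℝ (f i)) := fun i => (hf.contDiff i).fderiv_right le_rfl
  have hbound : ∀ n i x, ‖iteratedFDeriv ℝ n (fderiv ℝ (f i)) x‖ ≤ b n i := fun n i x =>
    norm_iteratedFDeriv_fderiv.trans_le (hfb n i x)
  refine ⟨contDiff_tsum hsmooth (fun n _ => hb n) fun n i x _ => hbound n i x, fun n x => ?_⟩
  rw [iteratedFDeriv_tsum_apply hsmooth (fun n _ => hb n) (fun n i x _ => hbound n i x) (N := ⊤)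
    le_top]
  exact (Summable.of_norm_bounded (hb n) fun i => hbound n i x).hasSum

theorem contDiff_tsum : ContDiff ℝ ∞ (fun x => ∑' i, f i x) :=
  contDiff_infty_iff_fderiv.2 ⟨hf.differentiable_tsum,
    hf.fderiv_tsum_eq ▸ hf.contDiff_tsum_fderiv_and_hasSum_iteratedFDeriv.1⟩

theorem hasSum_iteratedFDeriv_succ (n : ℕ) (x : E) :
    HasSum (fun i => iteratedFDeriv ℝ (n + 1) (f i) x)
      (iteratedFDeriv ℝ (n + 1) (fun x => ∑' i, f i x) x) := by
  simp_rw [iteratedFDeriv_succ_eq_comp_right, Function.comp_apply, hf.fderiv_tsum_eq]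
  exact (continuousMultilinearCurryRightEquiv' ℝ n E F).symm.toContinuousLinearEquiv.hasSum'.2
    (hf.contDiff_tsum_fderiv_and_hasSum_iteratedFDeriv.2 n x)

end IsDominatedSeries

end Series

section ParametricIntegral

variable {T E F : Type*} [NormedAddCommGroup T] [NormedSpace ℝ T]
  [NormedAddCommGroup E] [NormedSpace ℝ E] [NormedAddCommGroup F] [NormedSpace ℝ F]

theorem contDiff_uncurry_iteratedFDeriv {f : T → E → F} (hf : ContDiff ℝ ∞ (Function.uncurry f))
    (n : ℕ) : ContDiff ℝ ∞ (fun p : T × E => iteratedFDeriv ℝ n (f p.1) p.2) := by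
  induction n with
  | zero => exact (continuousMultilinearCurryFin0 ℝ E F).symm.contDiff.comp hf
  | succ n ih =>
    simp_rw [iteratedFDeriv_succ_eq_comp_left]
    exact (continuousMultilinearCurryLeftEquiv ℝ (fun _ : Fin (n + 1) => E) F).symm.contDiff.comp
      (ContDiff.fderiv (f := fun (p : T × E) x => iteratedFDeriv ℝ n (f p.1) x) (g := Prod.snd)
        (m := ∞) (n := ∞) (ih.comp (contDiff_fst.fst.prodMk contDiff_snd)) contDiff_snd le_rfl)

variable [MeasurableSpace T] [BorelSpace T] [SecondCountableTopology T] {μ : Measure T}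

theorem hasFDerivAt_integral_of_contDiff_uncurry {f : T → E → F}
    (hf : ContDiff ℝ ∞ (Function.uncurry f)) {b₀ b₁ : T → ℝ} (hb₀ : Integrable b₀ μ)
    (hb₁ : Integrable b₁ μ) (hfb₀ : ∀ᵐ t ∂μ, ∀ x, ‖f t x‖ ≤ b₀ t)
    (hfb₁ : ∀ᵐ t ∂μ, ∀ x, ‖fderiv ℝ (f t) x‖ ≤ b₁ t) (x : E) :
    HasFDerivAt (fun x => ∫ t, f t x ∂μ) (∫ t, fderiv ℝ (f t) x ∂μ) x := by
  have hmeas : ∀ y, AEStronglyMeasurable (fun t => f t y) μ := fun y =>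
    (hf.continuous.uncurry_right y).aestronglyMeasurable
  have hmeas' : Continuous fun t => fderiv ℝ (f t) x :=
    (ContDiff.fderiv (m := ∞) (n := ∞) hf (contDiff_const (c := x)) le_rfl).continuous
  refine hasFDerivAt_integral_of_dominated_of_fderiv_le univ_mem (.of_forall hmeas)
    (hb₀.mono' (hmeas x) (hfb₀.mono fun _ ht => ht x)) hmeas'.aestronglyMeasurable
    (hfb₁.mono fun t ht y _ => ht y) hb₁ (.of_forall fun t y _ => ?_)
  have hft : ContDiff ℝ ∞ (f t) := hf.comp (contDiff_const.prodMk contDiff_id)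
  exact (hft.differentiable (by simp) y).hasFDerivAt

/-- A jointly smooth family whose derivatives in the second variable, of every order, are bounded
uniformly in that variable by an integrable function of the parameter, so that it may be
differentiated under the integral sign indefinitely. -/
structure IsDominatedFamily (f : T → E → F) (μ : Measure T) : Prop where
  contDiff_uncurry : ContDiff ℝ ∞ (Function.uncurry f)
  exists_bound : ∀ n, ∃ b : T → ℝ, Integrable b μ ∧
    ∀ᵐ t ∂μ, ∀ x, ‖iteratedFDeriv ℝ n (f t) x‖ ≤ b t

namespace IsDominatedFamily

variable {f : T → E → F} (hf : IsDominatedFamily f μ)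
include hf

theorem integrable_iteratedFDeriv (n : ℕ) (x : E) :
    Integrable (fun t => iteratedFDeriv ℝ n (f t) x) μ := by
  obtain ⟨b, hb, hfb⟩ := hf.exists_bound n
  exact hb.mono' ((contDiff_uncurry_iteratedFDeriv hf.contDiff_uncurry n).continuous.comp
    (continuous_id.prodMk continuous_const)).aestronglyMeasurable (hfb.mono fun _ ht => ht x)

theorem hasFDerivAt_integral_iteratedFDeriv (n : ℕ) (x : E) :
    HasFDerivAt (fun x => ∫ t, iteratedFDeriv ℝ n (f t) x ∂μ)
      (∫ t, fderiv ℝ (iteratedFDeriv ℝ n (f t)) x ∂μ) x := by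
  obtain ⟨b₀, hb₀, hfb₀⟩ := hf.exists_bound n
  obtain ⟨b₁, hb₁, hfb₁⟩ := hf.exists_bound (n + 1)
  exact hasFDerivAt_integral_of_contDiff_uncurry
    (contDiff_uncurry_iteratedFDeriv hf.contDiff_uncurry n) hb₀ hb₁ hfb₀
    (hfb₁.mono fun _ ht y => norm_fderiv_iteratedFDeriv.trans_le (ht y)) x

theorem iteratedFDeriv_integral (n : ℕ) :
    iteratedFDeriv ℝ n (fun x => ∫ t, f t x ∂μ) = fun x => ∫ t, iteratedFDeriv ℝ n (f t) x ∂μ := by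
  induction n with
  | zero =>
    funext x
    exact ((continuousMultilinearCurryFin0 ℝ E F).symm.toContinuousLinearEquiv.integral_comp_comm
      _).symm
  | succ n ih =>
    funext x
    simp_rw [iteratedFDeriv_succ_eq_comp_left, Function.comp_apply, ih]
    rw [(hf.hasFDerivAt_integral_iteratedFDeriv n x).fderiv]
    exact (ContinuousLinearEquiv.integral_comp_comm (𝕜 := ℝ) (E := E →L[ℝ] E [×n]→L[ℝ] F)
      (F := E [×(n + 1)]→L[ℝ] F) (continuousMultilinearCurryLeftEquiv ℝ
        (fun _ : Fin (n + 1) => E) F).symm.toContinuousLinearEquiv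
      fun t => fderiv ℝ (iteratedFDeriv ℝ n (f t)) x).symm

theorem contDiff_integral : ContDiff ℝ ∞ (fun x => ∫ t, f t x ∂μ) := by
  refine contDiff_of_differentiable_iteratedFDeriv fun n _ x => ?_
  rw [hf.iteratedFDeriv_integral]
  exact (hf.hasFDerivAt_integral_iteratedFDeriv n x).differentiableAt

theorem norm_iteratedFDeriv_integral_le (n : ℕ) (x : E) :
    ‖iteratedFDeriv ℝ n (fun x => ∫ t, f t x ∂μ) x‖ ≤ ∫ t, ‖iteratedFDeriv ℝ n (f t) x‖ ∂μ := by
  rw [hf.iteratedFDeriv_integral]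
  exact norm_integral_le_integral_norm _

end IsDominatedFamily

end ParametricIntegral

section PlaneWave

variable {E W : Type*} [NormedAddCommGroup E] [NormedSpace ℝ E]
  [NormedAddCommGroup W] [NormedSpace ℝ W]

theorem iteratedFDeriv_comp_clm_smul_const_apply {φ : ℝ → ℝ} (hφ : ContDiff ℝ ∞ φ) (ℓ : E →L[ℝ] ℝ)
    (w : W) (n : ℕ) (x : E) (m : Fin n → E) :
    iteratedFDeriv ℝ n (fun y => φ (ℓ y) • w) x m =
      ((∏ i, ℓ (m i)) * iteratedDeriv n φ (ℓ x)) • w := by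
  have hφn : ContDiff ℝ n φ := hφ.of_le (mod_cast le_top)
  have hcomp : (fun y => φ (ℓ y) • w) = ContinuousLinearMap.toSpanSingleton ℝ w ∘ φ ∘ ℓ := by
    ext y; simp
  rw [hcomp, ContinuousLinearMap.iteratedFDeriv_comp_left _
      ((hφn.comp ℓ.contDiff).contDiffAt (x := x)) le_rfl,
    ContinuousLinearMap.compContinuousMultilinearMap_coe, Function.comp_apply,
    ℓ.iteratedFDeriv_comp_right hφn x le_rfl,
    ContinuousMultilinearMap.compContinuousLinearMap_apply,
    iteratedFDeriv_apply_eq_iteratedDeriv_mul_prod, ContinuousLinearMap.toSpanSingleton_apply,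
    smul_eq_mul]

theorem norm_iteratedFDeriv_cos_clm_smul_const_le (ℓ : E →L[ℝ] ℝ) (w : W) (n : ℕ) (x : E) :
    ‖iteratedFDeriv ℝ n (fun y => Real.cos (ℓ y) • w) x‖ ≤ ‖ℓ‖ ^ n * ‖w‖ := by
  refine ContinuousMultilinearMap.opNorm_le_bound (by positivity) fun m => ?_
  rw [iteratedFDeriv_comp_clm_smul_const_apply Real.contDiff_cos, norm_smul, norm_mul, norm_prod]
  calc (∏ i, ‖ℓ (m i)‖) * ‖iteratedDeriv n Real.cos (ℓ x)‖ * ‖w‖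
      ≤ (∏ i, ‖ℓ‖ * ‖m i‖) * 1 * ‖w‖ := by
        gcongr with i
        · exact ℓ.le_opNorm _
        · exact Real.abs_iteratedDeriv_cos_le_one n (ℓ x)
    _ = ‖ℓ‖ ^ n * ‖w‖ * ∏ i, ‖m i‖ := by
        rw [Finset.prod_mul_distrib, Finset.prod_const, Finset.card_univ, Fintype.card_fin]
        ring

end PlaneWave

section Operator

variable {E V : Type*} [NormedAddCommGroup E] [InnerProductSpace ℝ E]
  [NormedAddCommGroup V] [NormedSpace ℝ V]

/-- The homogeneous second-order differential operator `u ↦ -𝒜 (D²u)` with constant coefficients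
`𝒜`, acting on functions with values in a vector space. -/
def secondOrderOp (𝒜 : (E [×2]→L[ℝ] V) →L[ℝ] V) (u : E → V) (x : E) : V :=
  -𝒜 (iteratedFDeriv ℝ 2 u x)

/-- The rank-one Hessian `(y, z) ↦ ⟪ξ, y⟫ ⟪ξ, z⟫ v` of a plane wave with frequency `ξ` and
amplitude `v`. -/
def planeWaveHessian (ξ : E) : V →L[ℝ] E [×2]→L[ℝ] V :=
  ContinuousMultilinearMap.smulRightL ℝ (fun _ : Fin 2 => E) V
    ((ContinuousMultilinearMap.mkPiAlgebra ℝ (Fin 2) ℝ).compContinuousLinearMap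
      fun _ => innerSL ℝ ξ)

theorem planeWaveHessian_apply (ξ : E) (v : V) (m : Fin 2 → E) :
    planeWaveHessian ξ v m = (⟪ξ, m 0⟫_ℝ * ⟪ξ, m 1⟫_ℝ) • v := by
  simp [planeWaveHessian]

/-- The principal symbol of `secondOrderOp 𝒜`. -/
def symbol (𝒜 : (E [×2]→L[ℝ] V) →L[ℝ] V) (ξ : E) : V →L[ℝ] V := 𝒜 ∘L planeWaveHessian ξ

/-- Ellipticity in the sense of Petrovskii: the symbol is invertible at nonzero frequencies. -/
def IsElliptic (𝒜 : (E [×2]→L[ℝ] V) →L[ℝ] V) : Prop := ∀ ξ, ξ ≠ 0 → IsUnit (symbol 𝒜 ξ)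

variable (𝒜 : (E [×2]→L[ℝ] V) →L[ℝ] V)

theorem contDiff_symbol : ContDiff ℝ ∞ (symbol 𝒜) := by
  have hprod : ContDiff ℝ ∞ fun ξ : E =>
      (ContinuousMultilinearMap.mkPiAlgebra ℝ (Fin 2) ℝ).compContinuousLinearMap
        fun _ => innerSL ℝ ξ :=
    (ContinuousMultilinearMap.compContinuousLinearMapContinuousMultilinear ℝ
      (fun _ : Fin 2 => E) (fun _ : Fin 2 => ℝ) ℝ).contDiff.comp
        (contDiff_pi.2 fun _ => (innerSL ℝ).contDiff) |>.clm_apply contDiff_const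
  exact contDiff_const.clm_comp
    ((ContinuousMultilinearMap.smulRightL ℝ (fun _ : Fin 2 => E) V).contDiff.comp hprod)

theorem secondOrderOp_cos_smul_const (ξ : E) (w : V) (x : E) :
    secondOrderOp 𝒜 (fun y => Real.cos (2 * Real.pi * ⟪ξ, y⟫_ℝ) • w) x =
      Real.cos (2 * Real.pi * ⟪ξ, x⟫_ℝ) • (4 * Real.pi ^ 2) • symbol 𝒜 ξ w := by
  have hD : iteratedFDeriv ℝ 2 (fun y => Real.cos (2 * Real.pi * ⟪ξ, y⟫_ℝ) • w) x =
      -((Real.cos (2 * Real.pi * ⟪ξ, x⟫_ℝ) * (4 * Real.pi ^ 2)) • planeWaveHessian ξ w) := by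
    ext m
    have h := iteratedFDeriv_comp_clm_smul_const_apply Real.contDiff_cos
      ((2 * Real.pi) • innerSL ℝ ξ) w 2 x m
    simp only [smul_apply, innerSL_apply_apply, smul_eq_mul] at h
    rw [h]
    simp [planeWaveHessian_apply, iteratedDeriv_succ, Fin.prod_univ_two, smul_smul]
    ring_nf
  rw [secondOrderOp, hD, map_neg, neg_neg, map_smul, mul_smul]
  rfl

theorem secondOrderOp_comp_sub (u : E → V) (a x : E) :
    secondOrderOp 𝒜 (fun y => u (y - a)) x = secondOrderOp 𝒜 u (x - a) := by
  rw [secondOrderOp, iteratedFDeriv_comp_sub, secondOrderOp]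

variable {𝒜}

theorem secondOrderOp_comp_smul {u : E → V} (hu : ContDiff ℝ 2 u) (c : ℝ) (x : E) :
    secondOrderOp 𝒜 (fun y => u (c • y)) x = c ^ 2 • secondOrderOp 𝒜 u (c • x) := by
  rw [secondOrderOp, iteratedFDeriv_comp_const_smul c hu, map_smul,
    secondOrderOp, smul_neg]

theorem secondOrderOp_const_smul {u : E → V} (hu : ContDiff ℝ 2 u) (c : ℝ) (x : E) :
    secondOrderOp 𝒜 (fun y => c • u y) x = c • secondOrderOp 𝒜 u x := by
  rw [secondOrderOp, iteratedFDeriv_const_smul_apply' hu.contDiffAt,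
    map_smul, secondOrderOp, smul_neg]

theorem secondOrderOp_sum {ι : Type*} {s : Finset ι} {u : ι → E → V}
    (hu : ∀ i ∈ s, ContDiff ℝ 2 (u i)) (x : E) :
    secondOrderOp 𝒜 (fun y => ∑ i ∈ s, u i y) x = ∑ i ∈ s, secondOrderOp 𝒜 (u i) x := by
  simp_rw [secondOrderOp, Finset.sum_neg_distrib, ← map_sum]
  rw [iteratedFDeriv_fun_sum_apply fun i hi => (hu i hi).contDiffAt]

theorem hasSum_secondOrderOp_tsum [CompleteSpace V] {ι : Type*} {f : ι → E → V}
    (hf : IsDominatedSeries f) (x : E) :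
    HasSum (fun i => secondOrderOp 𝒜 (f i) x) (secondOrderOp 𝒜 (fun x => ∑' i, f i x) x) :=
  ((hf.hasSum_iteratedFDeriv_succ 1 x).mapL 𝒜).neg

theorem secondOrderOp_integral [CompleteSpace V] {T : Type*} [NormedAddCommGroup T]
    [NormedSpace ℝ T] [MeasurableSpace T] [BorelSpace T] [SecondCountableTopology T]
    {μ : Measure T} {f : T → E → V} (hf : IsDominatedFamily f μ) (x : E) :
    secondOrderOp 𝒜 (fun x => ∫ t, f t x ∂μ) x = ∫ t, secondOrderOp 𝒜 (f t) x ∂μ := by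
  rw [secondOrderOp, hf.iteratedFDeriv_integral,
    ← 𝒜.integral_comp_comm (hf.integrable_iteratedFDeriv 2 x), ← integral_neg]
  rfl

end Operator

section CosineTransform

variable {E : Type*} [NormedAddCommGroup E] [InnerProductSpace ℝ E] [FiniteDimensional ℝ E]
  [MeasurableSpace E] [BorelSpace E] {W : Type*} [NormedAddCommGroup W] [NormedSpace ℝ W]

/-- The integral of `q` against the real plane waves of all frequencies; for real even `q` this is
the Fourier transform of `q`, for general `q` that of its even part. -/
def cosineTransform (q : E → W) (x : E) : W := ∫ ξ, Real.cos (2 * Real.pi * ⟪ξ, x⟫_ℝ) • q ξ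

theorem cosineTransform_comp_smul (q : E → W) {c : ℝ} (hc : c ≠ 0) (x : E) :
    cosineTransform (fun ξ => q (c • ξ)) x =
      |c|⁻¹ ^ Module.finrank ℝ E • cosineTransform q (c⁻¹ • x) := by
  have h := Measure.integral_comp_smul volume
    (fun ξ : E => Real.cos (2 * Real.pi * ⟪ξ, c⁻¹ • x⟫_ℝ) • q ξ) c
  rw [abs_inv, abs_pow, ← inv_pow] at h
  simpa only [cosineTransform, real_inner_smul_left, real_inner_smul_right,
    inv_mul_cancel_left₀ hc] using h

theorem exists_schwartz_real_eq_cosineTransform (q : 𝓢(E, ℝ)) : ∃ g : 𝓢(E, ℝ),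
    (∀ x, g x = cosineTransform q x) ∧ ∫ x, g x = q 0 := by
  let Q : 𝓢(E, ℂ) := q.postcompCLM Complex.ofRealCLM
  have hint : ∀ x, Integrable fun ξ => Complex.exp ((2 * Real.pi * ⟪ξ, x⟫_ℝ : ℝ) * Complex.I) *
      (q ξ : ℂ) := fun x =>
    (Q.integrable (μ := volume)).bdd_mul (c := 1)
      (by fun_prop) (.of_forall fun ξ => (Complex.norm_exp_ofReal_mul_I _).le)
  refine ⟨(𝓕⁻ Q).postcompCLM Complex.reCLM, fun x => ?_, ?_⟩
  · calc (𝓕⁻ Q x).re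
        = (∫ ξ, Complex.exp ((2 * Real.pi * ⟪ξ, x⟫_ℝ : ℝ) * Complex.I) * (q ξ : ℂ)).re := by
          rw [SchwartzMap.fourierInv_coe, Real.fourierInv_eq']; rfl
      _ = cosineTransform q x := by
          refine (integral_re (𝕜 := ℂ) (hint x)).symm.trans ?_
          simp [cosineTransform, Complex.exp_ofReal_mul_I_re, -Complex.ofReal_mul]
  · have h0 : ∫ x, 𝓕⁻ Q x = q 0 := by
      calc ∫ x, 𝓕⁻ Q x = 𝓕 (𝓕⁻ Q) 0 := by rw [SchwartzMap.fourier_coe, Real.fourier_eq]; simp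
        _ = q 0 := by rw [FourierTransform.fourier_fourierInv_eq]; rfl
    calc ∫ x, (𝓕⁻ Q x).re = (∫ x, 𝓕⁻ Q x).re := integral_re (𝕜 := ℂ) (𝓕⁻ Q).integrable
      _ = q 0 := by rw [h0, Complex.ofReal_re]

theorem integrable_cos_smul {q : E → W} (hq : Integrable q) (x : E) :
    Integrable fun ξ => Real.cos (2 * Real.pi * ⟪ξ, x⟫_ℝ) • q ξ :=
  hq.bdd_smul (C := 1) (by fun_prop) (.of_forall fun _ => Real.abs_cos_le_one _)

theorem clm_cosineTransform {W' : Type*} [NormedAddCommGroup W'] [NormedSpace ℝ W']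
    [CompleteSpace W] [CompleteSpace W'] (L : W →L[ℝ] W') {q : E → W} (hq : Integrable q) (x : E) :
    L (cosineTransform q x) = cosineTransform (fun ξ => L (q ξ)) x := by
  simpa [cosineTransform] using (L.integral_comp_comm (integrable_cos_smul hq x)).symm

theorem exists_schwartz_eq_cosineTransform [FiniteDimensional ℝ W] (q : 𝓢(E, W)) :
    ∃ g : 𝓢(E, W), ∀ x, g x = cosineTransform q x := by
  have := FiniteDimensional.complete ℝ W
  let b := Module.finBasis ℝ W
  let coord i : W →L[ℝ] ℝ := LinearMap.toContinuousLinearMap (b.coord i)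
  choose g hg _ using fun i => exists_schwartz_real_eq_cosineTransform (q.postcompCLM (coord i))
  refine ⟨∑ i, (g i).postcompCLM (ContinuousLinearMap.toSpanSingleton ℝ (b i)), fun x => ?_⟩
  have hcoord : ∀ i, g i x = b.repr (cosineTransform q x) i := fun i =>
    (hg i x).trans (clm_cosineTransform (coord i) q.integrable x).symm
  rw [← b.sum_repr (cosineTransform q x)]
  simp [hcoord]

theorem secondOrderOp_cosineTransform {V : Type*} [NormedAddCommGroup V] [NormedSpace ℝ V]
    [FiniteDimensional ℝ V] (𝒜 : (E [×2]→L[ℝ] V) →L[ℝ] V) (q : 𝓢(E, V)) :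
    secondOrderOp 𝒜 (cosineTransform q) =
      cosineTransform fun ξ => (4 * Real.pi ^ 2) • symbol 𝒜 ξ (q ξ) := by
  have := FiniteDimensional.complete ℝ V
  have hf : IsDominatedFamily (fun ξ x : E => Real.cos (2 * Real.pi * ⟪ξ, x⟫_ℝ) • q ξ) volume :=
    { contDiff_uncurry :=
        (Real.contDiff_cos.comp (contDiff_const.mul (contDiff_fst.inner ℝ contDiff_snd))).smul
          ((q.smooth _).comp contDiff_fst)
      exists_bound := fun n => by
        refine ⟨fun ξ => (2 * Real.pi) ^ n * (‖ξ‖ ^ n * ‖q ξ‖),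
          (q.integrable_pow_mul volume n).const_mul _, .of_forall fun ξ x => ?_⟩
        have h := norm_iteratedFDeriv_cos_clm_smul_const_le ((2 * Real.pi) • innerSL ℝ ξ) (q ξ) n x
        rwa [norm_smul, innerSL_apply_norm, Real.norm_of_nonneg (by positivity), mul_pow,
          mul_assoc] at h }
  funext x
  exact (secondOrderOp_integral hf x).trans
    (integral_congr_ae (.of_forall fun ξ => secondOrderOp_cos_smul_const 𝒜 ξ (q ξ) x))

end CosineTransform

section Cutoff

variable {E : Type*} [NormedAddCommGroup E] [InnerProductSpace ℝ E]

/-- A smooth function equal to `1` on the closed unit ball and supported in the closed ball of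
radius `2`, from which all cutoffs are built. -/
def ballCutoff (x : E) : ℝ := (⟨1, 2, one_pos, one_lt_two⟩ : ContDiffBump (0 : E)) x

/-- The dyadic difference of `ballCutoff`: its dilates by powers of `2` telescope. -/
def annulusCutoff (x : E) : ℝ := ballCutoff x - ballCutoff ((2 : ℝ) • x)

theorem contDiff_ballCutoff : ContDiff ℝ ∞ (ballCutoff : E → ℝ) := ContDiffBump.contDiff _

theorem contDiff_annulusCutoff : ContDiff ℝ ∞ (annulusCutoff : E → ℝ) :=
  contDiff_ballCutoff.sub (contDiff_ballCutoff.comp (contDiff_const_smul _))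

theorem ballCutoff_eq_one {x : E} (hx : ‖x‖ ≤ 1) : ballCutoff x = 1 :=
  ContDiffBump.one_of_mem_closedBall _ (by simpa using hx)

theorem ballCutoff_eq_zero {x : E} (hx : 2 ≤ ‖x‖) : ballCutoff x = 0 :=
  ContDiffBump.zero_of_le_dist _ (by simpa using hx)

theorem annulusCutoff_eq_zero_of_le {x : E} (hx : ‖x‖ ≤ 1 / 2) : annulusCutoff x = 0 := by
  rw [annulusCutoff, ballCutoff_eq_one (by linarith), ballCutoff_eq_one, sub_self]
  rw [norm_smul, Real.norm_two]; linarith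

theorem annulusCutoff_eq_zero_of_ge {x : E} (hx : 2 ≤ ‖x‖) : annulusCutoff x = 0 := by
  rw [annulusCutoff, ballCutoff_eq_zero hx, ballCutoff_eq_zero, sub_self]
  rw [norm_smul, Real.norm_two]; linarith

theorem hasCompactSupport_ballCutoff [FiniteDimensional ℝ E] :
    HasCompactSupport (ballCutoff : E → ℝ) := ContDiffBump.hasCompactSupport _

theorem hasCompactSupport_annulusCutoff [FiniteDimensional ℝ E] :
    HasCompactSupport (annulusCutoff : E → ℝ) :=
  hasCompactSupport_ballCutoff.sub (hasCompactSupport_ballCutoff.comp_smul two_ne_zero)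

end Cutoff

section DyadicKernel

variable {E V : Type*} [NormedAddCommGroup E] [InnerProductSpace ℝ E]
  [NormedAddCommGroup V] [NormedSpace ℝ V] {𝒜 : (E [×2]→L[ℝ] V) →L[ℝ] V}

/-- The localisation of the inverse symbol to frequencies of size about `1`. -/
def localizedInverseSymbol (𝒜 : (E [×2]→L[ℝ] V) →L[ℝ] V) (ξ : E) : V →L[ℝ] V :=
  (annulusCutoff ξ * (4 * Real.pi ^ 2)⁻¹) • Ring.inverse (symbol 𝒜 ξ)

theorem symbol_localizedInverseSymbol (h𝒜 : IsElliptic 𝒜) (ξ : E) (v : V) :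
    (4 * Real.pi ^ 2) • symbol 𝒜 ξ (localizedInverseSymbol 𝒜 ξ v) = annulusCutoff ξ • v := by
  rcases eq_or_ne ξ 0 with rfl | hξ
  · simp [localizedInverseSymbol, annulusCutoff_eq_zero_of_le]
  · have hinv : symbol 𝒜 ξ (Ring.inverse (symbol 𝒜 ξ) v) = v :=
      DFunLike.congr_fun (Ring.mul_inverse_cancel _ (h𝒜 ξ hξ)) v
    rw [localizedInverseSymbol, smul_apply, map_smul, hinv, smul_smul]
    field_simp

variable [FiniteDimensional ℝ V]

theorem IsElliptic.of_injective
    (h𝒜 : ∀ ξ, ξ ≠ 0 → ∀ v, symbol 𝒜 ξ v = 0 → v = 0) : IsElliptic 𝒜 := fun ξ hξ => by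
  have hinj : Function.Injective (symbol 𝒜 ξ) := (injective_iff_map_eq_zero _).2 (h𝒜 ξ hξ)
  have := FiniteDimensional.complete ℝ V
  exact ContinuousLinearMap.isUnit_iff_bijective.2
    ⟨hinj, (LinearMap.injective_iff_surjective (f := (symbol 𝒜 ξ).toLinearMap)).1 hinj⟩

theorem contDiff_localizedInverseSymbol (h𝒜 : IsElliptic 𝒜) :
    ContDiff ℝ ∞ (localizedInverseSymbol 𝒜) := by
  have := FiniteDimensional.complete ℝ V
  refine contDiff_iff_contDiffAt.2 fun ξ => ?_
  rcases eq_or_ne ξ 0 with rfl | hξ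
  · refine (contDiffAt_const (c := 0)).congr_of_eventuallyEq ?_
    filter_upwards [Metric.closedBall_mem_nhds (0 : E) (by norm_num : (0 : ℝ) < 1 / 2)] with y hy
    simp [localizedInverseSymbol, annulusCutoff_eq_zero_of_le (mem_closedBall_zero_iff.1 hy)]
  · obtain ⟨a, ha⟩ := h𝒜 ξ hξ
    have hinv : ContDiffAt ℝ ∞ Ring.inverse (symbol 𝒜 ξ) := ha ▸ contDiffAt_ringInverse ℝ a
    exact (contDiff_annulusCutoff.contDiffAt.mul contDiffAt_const).smul
      (hinv.comp ξ (contDiff_symbol 𝒜).contDiffAt)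

theorem exists_dyadic_kernel [FiniteDimensional ℝ E] [MeasurableSpace E] [BorelSpace E]
    (h𝒜 : IsElliptic 𝒜) : ∃ g φ : 𝓢(E, V →L[ℝ] V), ∫ x, φ x = 1 ∧ ∀ v x,
      secondOrderOp 𝒜 (fun y => g y v) x =
        φ x v - (2 : ℝ)⁻¹ ^ Module.finrank ℝ E • φ ((2 : ℝ)⁻¹ • x) v := by
  have := FiniteDimensional.complete ℝ V
  let Q : 𝓢(E, V →L[ℝ] V) := HasCompactSupport.toSchwartzMap (f := localizedInverseSymbol 𝒜)
    (hasCompactSupport_annulusCutoff.mul_right.smul_right)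
    (contDiff_localizedInverseSymbol h𝒜)
  let X : 𝓢(E, ℝ) := hasCompactSupport_ballCutoff.toSchwartzMap contDiff_ballCutoff
  obtain ⟨g, hg⟩ := exists_schwartz_eq_cosineTransform Q
  obtain ⟨φ, hφ, hφ1⟩ := exists_schwartz_real_eq_cosineTransform X
  refine ⟨g, φ.postcompCLM (.toSpanSingleton ℝ 1), ?_, fun v x => ?_⟩
  · calc ∫ x, φ x • (1 : V →L[ℝ] V) = X 0 • (1 : V →L[ℝ] V) := by rw [integral_smul_const, hφ1]
      _ = 1 := by rw [show X 0 = 1 from ballCutoff_eq_one (by simp), one_smul]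
  let apply_v : (V →L[ℝ] V) →L[ℝ] V := ContinuousLinearMap.apply ℝ V v
  have hgv : (fun y => g y v) = cosineTransform (Q.postcompCLM apply_v) := by
    funext y
    exact (congrArg apply_v (hg y)).trans (clm_cosineTransform apply_v Q.integrable y)
  have hcut : cosineTransform annulusCutoff x =
      φ x - (2 : ℝ)⁻¹ ^ Module.finrank ℝ E * φ ((2 : ℝ)⁻¹ • x) := by
    have hX : Integrable fun ξ : E => X ((2 : ℝ) • ξ) := X.integrable.comp_smul two_ne_zero
    have hscale := cosineTransform_comp_smul (X : E → ℝ) two_ne_zero x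
    rw [abs_two, smul_eq_mul] at hscale
    rw [hφ, hφ, ← hscale, cosineTransform, cosineTransform, cosineTransform,
      ← integral_sub (integrable_cos_smul X.integrable x) (integrable_cos_smul hX x)]
    simp only [← smul_sub]
    rfl
  calc secondOrderOp 𝒜 (fun y => g y v) x
      = cosineTransform (fun ξ => (4 * Real.pi ^ 2) • symbol 𝒜 ξ (Q ξ v)) x := by
        rw [hgv, secondOrderOp_cosineTransform]
        rfl
    _ = cosineTransform (fun ξ => annulusCutoff ξ • v) x :=
        congrArg (cosineTransform · x) (funext fun ξ => symbol_localizedInverseSymbol h𝒜 ξ v)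
    _ = cosineTransform annulusCutoff x • v := by
        rw [cosineTransform, cosineTransform, ← integral_smul_const]
        simp only [smul_assoc]
    _ = φ x • v - (2 : ℝ)⁻¹ ^ Module.finrank ℝ E • φ ((2 : ℝ)⁻¹ • x) • v := by
        rw [hcut, sub_smul, mul_smul]

end DyadicKernel

section CompactSupport

variable {E F : Type*} [NormedAddCommGroup E] [NormedSpace ℝ E] [NormedAddCommGroup F]
  [NormedSpace ℝ F] {f : E → F}

theorem exists_norm_iteratedFDeriv_le_of_hasCompactSupport (hf : ContDiff ℝ ∞ f)
    (hc : HasCompactSupport f) : ∃ B : ℕ → ℝ, ∀ n x, ‖iteratedFDeriv ℝ n f x‖ ≤ B n := by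
  choose B hB using fun n =>
    (hf.continuous_iteratedFDeriv (m := n) (mod_cast le_top)).bounded_above_of_compact_support
      (hc.iteratedFDeriv n)
  exact ⟨B, hB⟩

theorem iteratedFDeriv_eq_zero_of_support_subset_closedBall {R : ℝ}
    (hsupp : Function.support f ⊆ Metric.closedBall 0 R) (n : ℕ) {x : E} (hx : R < ‖x‖) :
    iteratedFDeriv ℝ n f x = 0 := by
  by_contra h
  have hmem : x ∈ Metric.closedBall (0 : E) R :=
    closure_minimal hsupp Metric.isClosed_closedBall (support_iteratedFDeriv_subset n h)
  exact hx.not_ge (mem_closedBall_zero_iff.1 hmem)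

omit [NormedSpace ℝ E] [NormedSpace ℝ F] in
theorem hasCompactSupport_of_support_subset_closedBall [ProperSpace E] {R : ℝ}
    (hsupp : Function.support f ⊆ Metric.closedBall 0 R) : HasCompactSupport f :=
  .of_support_subset_isCompact (isCompact_closedBall 0 R) hsupp

end CompactSupport

section SchwartzDecay

variable {E F : Type*} [NormedAddCommGroup E] [NormedSpace ℝ E] [NormedAddCommGroup F]
  [NormedSpace ℝ F]

theorem exists_one_add_norm_pow_mul_norm_iteratedFDeriv_le (g : 𝓢(E, F)) (q n : ℕ) :
    ∃ C, 0 ≤ C ∧ ∀ x, (1 + ‖x‖) ^ q * ‖iteratedFDeriv ℝ n g x‖ ≤ C :=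
  ⟨_, by positivity, fun x =>
    g.one_add_le_sup_seminorm_apply (𝕜 := ℝ) (m := (q, n)) le_rfl le_rfl x⟩

theorem integrable_one_add_norm_pow_mul [FiniteDimensional ℝ E] [MeasurableSpace E] [BorelSpace E]
    (g : 𝓢(E, F)) (q : ℕ) (μ : Measure E) [μ.HasTemperateGrowth] :
    Integrable (fun z => (1 + ‖z‖) ^ q * ‖g z‖) μ := by
  simp_rw [add_pow, one_pow, one_mul, Finset.sum_mul, mul_right_comm _ (_ : ℝ) ‖g _‖]
  exact integrable_finsetSum _ fun i _ => (g.integrable_pow_mul μ (q - i)).mul_const _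

end SchwartzDecay

section ScaleAverage

variable {E V W : Type*} [NormedAddCommGroup E] [InnerProductSpace ℝ E] [FiniteDimensional ℝ E]
  [MeasurableSpace E] [BorelSpace E] [NormedAddCommGroup V] [NormedSpace ℝ V]
  [NormedAddCommGroup W] [NormedSpace ℝ W]

/-- The convolution of `F` with the operator-valued kernel `g`, dilated to the length scale `s`
while keeping its integral. -/
def scaleAverage (g : E → V →L[ℝ] W) (F : E → V) (s : ℝ) (x : E) : W :=
  ∫ z, g z (F (x - s • z))

theorem scaleAverage_eq_integral_sub (g : E → V →L[ℝ] W) (F : E → V) {s : ℝ} (hs : 0 < s) (x : E) :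
    scaleAverage g F s x = s⁻¹ ^ Module.finrank ℝ E • ∫ y, g (s⁻¹ • (x - y)) (F y) := by
  have hscale := Measure.integral_comp_smul volume (fun w : E => g (s⁻¹ • w) (F (x - w))) s
  have htrans := integral_sub_left_eq_self (fun w : E => g (s⁻¹ • w) (F (x - w))) volume x
  rw [← htrans, abs_inv, abs_pow, ← inv_pow, abs_of_pos hs] at hscale
  simpa only [scaleAverage, inv_smul_smul₀ hs.ne', sub_sub_cancel] using hscale

omit [FiniteDimensional ℝ E] [MeasurableSpace E] [BorelSpace E] in
theorem norm_iteratedFDeriv_clm_comp_sub_le {F : E → V} (hF : ContDiff ℝ ∞ F) (L : V →L[ℝ] W)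
    (a : E) (n : ℕ) (x : E) :
    ‖iteratedFDeriv ℝ n (fun y => L (F (y - a))) x‖ ≤ ‖L‖ * ‖iteratedFDeriv ℝ n F (x - a)‖ := by
  rw [← iteratedFDeriv_comp_sub]
  exact norm_iteratedFDeriv_clm_comp_le (hF.comp (contDiff_id.sub contDiff_const)) L n x

variable (g : 𝓢(E, V →L[ℝ] W))

section Family

variable {F : E → V} (hF : ContDiff ℝ ∞ F) (hc : HasCompactSupport F)
include hF hc

theorem isDominatedFamily_clm_comp_sub_smul (s : ℝ) :
    IsDominatedFamily (fun z x : E => g z (F (x - s • z))) volume where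
  contDiff_uncurry := ((g.smooth _).comp contDiff_fst).clm_apply
    (hF.comp (contDiff_snd.sub (contDiff_fst.const_smul s)))
  exists_bound n := by
    obtain ⟨B, hB⟩ := exists_norm_iteratedFDeriv_le_of_hasCompactSupport hF hc
    refine ⟨fun z => ‖g z‖ * B n, g.integrable.norm.mul_const (B n), .of_forall fun z x => ?_⟩
    exact (norm_iteratedFDeriv_clm_comp_sub_le hF (g z) (s • z) n x).trans
      (mul_le_mul_of_nonneg_left (hB n _) (norm_nonneg _))

theorem contDiff_scaleAverage (s : ℝ) : ContDiff ℝ ∞ (scaleAverage g F s) :=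
  (isDominatedFamily_clm_comp_sub_smul g hF hc s).contDiff_integral

omit [FiniteDimensional ℝ E] [MeasurableSpace E] [BorelSpace E] hF hc in
theorem norm_iteratedFDeriv_clm_smul_sub_apply_le {s : ℝ} (hs : 0 < s) (y : E) (v : V) (n : ℕ)
    (x : E) : ‖iteratedFDeriv ℝ n (fun x => g (s⁻¹ • (x - y)) v) x‖ ≤
      s⁻¹ ^ n * ‖iteratedFDeriv ℝ n g (s⁻¹ • (x - y))‖ * ‖v‖ := by
  refine (norm_iteratedFDeriv_clm_comp_sub_le (F := fun w => g (s⁻¹ • w))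
    ((g.smooth _).comp (contDiff_const_smul s⁻¹)) (ContinuousLinearMap.apply ℝ W v) y n x).trans ?_
  rw [norm_iteratedFDeriv_comp_smul (g.smooth _), abs_of_pos (inv_pos.2 hs), mul_comm]
  gcongr
  exact ContinuousLinearMap.opNorm_le_bound _ (norm_nonneg v) fun T =>
    (T.le_opNorm v).trans_eq (mul_comm _ _)

theorem isDominatedFamily_smul_sub_apply {s : ℝ} (hs : 0 < s) :
    IsDominatedFamily (fun y x : E => g (s⁻¹ • (x - y)) (F y)) volume where
  contDiff_uncurry := ((g.smooth _).comp ((contDiff_snd.sub contDiff_fst).const_smul s⁻¹)).clm_apply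
    (hF.comp contDiff_fst)
  exists_bound n := by
    obtain ⟨C, -, hC⟩ := exists_one_add_norm_pow_mul_norm_iteratedFDeriv_le g 0 n
    refine ⟨fun y => s⁻¹ ^ n * C * ‖F y‖,
      (hF.continuous.integrable_of_hasCompactSupport hc).norm.const_mul _,
      .of_forall fun y x => (norm_iteratedFDeriv_clm_smul_sub_apply_le g hs y (F y) n x).trans ?_⟩
    beta_reduce
    gcongr
    simpa using hC (s⁻¹ • (x - y))

end Family

theorem exists_norm_iteratedFDeriv_scaleAverage_le_of_le_one (q : ℕ) :
    ∃ C, ∀ F : E → V, ContDiff ℝ ∞ F → Function.support F ⊆ Metric.closedBall 0 2 →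
      ∀ n A, (∀ y, ‖iteratedFDeriv ℝ n F y‖ ≤ A) → ∀ s x, 0 ≤ s → s ≤ 1 →
        ‖iteratedFDeriv ℝ n (scaleAverage g F s) x‖ ≤ C * A / (1 + ‖x‖) ^ q := by
  refine ⟨3 ^ q * ∫ z, (1 + ‖z‖) ^ q * ‖g z‖, fun F hF hsupp n A hA s x hs₀ hs₁ => ?_⟩
  have hA₀ : 0 ≤ A := (norm_nonneg _).trans (hA 0)
  have hdom := isDominatedFamily_clm_comp_sub_smul g hF
    (hasCompactSupport_of_support_subset_closedBall hsupp) s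
  have hpoint : ∀ z, ‖iteratedFDeriv ℝ n (fun x => g z (F (x - s • z))) x‖ ≤
      3 ^ q * A / (1 + ‖x‖) ^ q * ((1 + ‖z‖) ^ q * ‖g z‖) := fun z => by
    refine (norm_iteratedFDeriv_clm_comp_sub_le hF (g z) (s • z) n x).trans ?_
    rcases lt_or_ge 2 ‖x - s • z‖ with hfar | hnear
    · rw [iteratedFDeriv_eq_zero_of_support_subset_closedBall hsupp n hfar, norm_zero, mul_zero]
      positivity
    · have hx : ‖x‖ ≤ 2 + ‖z‖ := calc
        ‖x‖ = ‖(x - s • z) + s • z‖ := by rw [sub_add_cancel]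
        _ ≤ 2 + ‖z‖ := norm_add_le_of_le hnear (by
          rw [norm_smul, Real.norm_of_nonneg hs₀]
          exact mul_le_of_le_one_left (norm_nonneg z) hs₁)
      calc ‖g z‖ * ‖iteratedFDeriv ℝ n F (x - s • z)‖
          ≤ ‖g z‖ * A * ((1 + ‖x‖) ^ q / (1 + ‖x‖) ^ q) := by
            rw [div_self (by positivity), mul_one]; gcongr; exact hA _
        _ ≤ ‖g z‖ * A * ((3 * (1 + ‖z‖)) ^ q / (1 + ‖x‖) ^ q) := by
            gcongr; linarith [norm_nonneg z]
        _ = 3 ^ q * A / (1 + ‖x‖) ^ q * ((1 + ‖z‖) ^ q * ‖g z‖) := by rw [mul_pow]; ring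
  calc ‖iteratedFDeriv ℝ n (scaleAverage g F s) x‖
      ≤ ∫ z, ‖iteratedFDeriv ℝ n (fun x => g z (F (x - s • z))) x‖ :=
        hdom.norm_iteratedFDeriv_integral_le n x
    _ ≤ ∫ z, 3 ^ q * A / (1 + ‖x‖) ^ q * ((1 + ‖z‖) ^ q * ‖g z‖) :=
        integral_mono_of_nonneg (.of_forall fun _ => norm_nonneg _)
          ((integrable_one_add_norm_pow_mul g q volume).const_mul _) (.of_forall hpoint)
    _ = (3 ^ q * ∫ z, (1 + ‖z‖) ^ q * ‖g z‖) * A / (1 + ‖x‖) ^ q := by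
        rw [integral_const_mul]; ring

omit [FiniteDimensional ℝ E] [MeasurableSpace E] [BorelSpace E] in
theorem exists_norm_iteratedFDeriv_clm_smul_sub_apply_le (q n : ℕ) :
    ∃ C, 0 ≤ C ∧ ∀ s : ℝ, 1 ≤ s → ∀ y ∈ Metric.closedBall (0 : E) 2, ∀ v x,
      ‖iteratedFDeriv ℝ n (fun x => g (s⁻¹ • (x - y)) v) x‖ ≤
        C * s⁻¹ ^ n * (s / (s + ‖x‖)) ^ q * ‖v‖ := by
  obtain ⟨C, hC₀, hC⟩ := exists_one_add_norm_pow_mul_norm_iteratedFDeriv_le g q n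
  refine ⟨3 ^ q * C, by positivity, fun s hs y hy v x => ?_⟩
  have hs₀ : 0 < s := one_pos.trans_le hs
  have hdist : s + ‖x‖ ≤ 3 * (s * (1 + ‖s⁻¹ • (x - y)‖)) := by
    rw [norm_smul, norm_inv, Real.norm_of_nonneg hs₀.le, mul_add, mul_inv_cancel_left₀ hs₀.ne']
    linarith [norm_sub_norm_le x y, mem_closedBall_zero_iff.1 hy, norm_nonneg (x - y)]
  have hone : 1 ≤ 3 * (s / (s + ‖x‖)) * (1 + ‖s⁻¹ • (x - y)‖) := by
    rw [mul_div_assoc', div_mul_eq_mul_div, one_le_div (by positivity)]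
    linarith
  have hkernel : ‖iteratedFDeriv ℝ n g (s⁻¹ • (x - y))‖ ≤ 3 ^ q * (s / (s + ‖x‖)) ^ q * C := calc
    ‖iteratedFDeriv ℝ n g (s⁻¹ • (x - y))‖
      ≤ (3 * (s / (s + ‖x‖)) * (1 + ‖s⁻¹ • (x - y)‖)) ^ q *
          ‖iteratedFDeriv ℝ n g (s⁻¹ • (x - y))‖ :=
        le_mul_of_one_le_left (norm_nonneg _) (one_le_pow₀ hone)
    _ = 3 ^ q * (s / (s + ‖x‖)) ^ q * ((1 + ‖s⁻¹ • (x - y)‖) ^ q *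
          ‖iteratedFDeriv ℝ n g (s⁻¹ • (x - y))‖) := by rw [mul_pow, mul_pow]; ring
    _ ≤ 3 ^ q * (s / (s + ‖x‖)) ^ q * C := by gcongr; exact hC _
  calc ‖iteratedFDeriv ℝ n (fun x => g (s⁻¹ • (x - y)) v) x‖
      ≤ s⁻¹ ^ n * ‖iteratedFDeriv ℝ n g (s⁻¹ • (x - y))‖ * ‖v‖ :=
        norm_iteratedFDeriv_clm_smul_sub_apply_le g hs₀ y v n x
    _ ≤ s⁻¹ ^ n * (3 ^ q * (s / (s + ‖x‖)) ^ q * C) * ‖v‖ := by gcongr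
    _ = 3 ^ q * C * s⁻¹ ^ n * (s / (s + ‖x‖)) ^ q * ‖v‖ := by ring

theorem exists_norm_iteratedFDeriv_scaleAverage_le_of_one_le (q n : ℕ) :
    ∃ C, 0 ≤ C ∧ ∀ F : E → V, ContDiff ℝ ∞ F → Function.support F ⊆ Metric.closedBall 0 2 →
      ∀ A, (∀ y, ‖F y‖ ≤ A) → ∀ s x, 1 ≤ s → ‖iteratedFDeriv ℝ n (scaleAverage g F s) x‖ ≤
        C * A * s⁻¹ ^ (Module.finrank ℝ E + n) * (s / (s + ‖x‖)) ^ q := by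
  obtain ⟨C, hC₀, hC⟩ := exists_norm_iteratedFDeriv_clm_smul_sub_apply_le g q n
  let B : Set E := Metric.closedBall 0 2
  refine ⟨C * volume.real B, by positivity, fun F hF hsupp A hA s x hs => ?_⟩
  have hs₀ : 0 < s := one_pos.trans_le hs
  have hdom := isDominatedFamily_smul_sub_apply g hF
    (hasCompactSupport_of_support_subset_closedBall hsupp) hs₀
  let f : E → E → W := fun y x => g (s⁻¹ • (x - y)) (F y)
  have hzero : ∀ y, y ∉ B → ‖iteratedFDeriv ℝ n (f y) x‖ = 0 := fun y hy => by
    have : F y = 0 := Function.notMem_support.1 fun h => hy (hsupp h)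
    simp [f, this, iteratedFDeriv_fun_zero]
  have hpoint : ∀ y ∈ B, ‖‖iteratedFDeriv ℝ n (f y) x‖‖ ≤
      C * s⁻¹ ^ n * (s / (s + ‖x‖)) ^ q * A := fun y hy => by
    rw [norm_norm]
    refine (hC s hs y hy (F y) x).trans ?_
    gcongr
    exact hA y
  calc ‖iteratedFDeriv ℝ n (scaleAverage g F s) x‖
      = s⁻¹ ^ Module.finrank ℝ E * ‖iteratedFDeriv ℝ n (fun x => ∫ y, f y x) x‖ := by
        rw [funext (scaleAverage_eq_integral_sub g F hs₀), iteratedFDeriv_const_smul_apply'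
          (hdom.contDiff_integral.contDiffAt.of_le (mod_cast le_top)), norm_smul,
          Real.norm_of_nonneg (by positivity)]
    _ ≤ s⁻¹ ^ Module.finrank ℝ E * ∫ y, ‖iteratedFDeriv ℝ n (f y) x‖ := by
        gcongr; exact hdom.norm_iteratedFDeriv_integral_le n x
    _ ≤ s⁻¹ ^ Module.finrank ℝ E * (C * s⁻¹ ^ n * (s / (s + ‖x‖)) ^ q * A * volume.real B) := by
        rw [← setIntegral_eq_integral_of_forall_compl_eq_zero hzero]
        gcongr
        exact (Real.le_norm_self _).trans (norm_setIntegral_le_of_norm_le_const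
          (isCompact_closedBall _ _).measure_lt_top hpoint)
    _ = C * volume.real B * A * s⁻¹ ^ (Module.finrank ℝ E + n) * (s / (s + ‖x‖)) ^ q := by
        rw [pow_add]; ring

end ScaleAverage

section ScaleLimits

variable {E V W : Type*} [NormedAddCommGroup E] [InnerProductSpace ℝ E] [FiniteDimensional ℝ E]
  [MeasurableSpace E] [BorelSpace E] [NormedAddCommGroup V] [NormedSpace ℝ V]
  [NormedAddCommGroup W] [NormedSpace ℝ W] (g : 𝓢(E, V →L[ℝ] W)) {F : E → V}

theorem continuous_scaleAverage_scale (hF : Continuous F) (hc : HasCompactSupport F) (x : E) :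
    Continuous fun s => scaleAverage g F s x := by
  obtain ⟨B, hB⟩ := hF.bounded_above_of_compact_support hc
  refine continuous_of_dominated (bound := fun z => ‖g z‖ * B) (fun s => ?_)
    (fun s => .of_forall fun z => ?_) (g.integrable.norm.mul_const B) (.of_forall fun z => ?_)
  · exact (g.continuous.clm_apply (hF.comp (by fun_prop))).aestronglyMeasurable
  · exact (g z).le_opNorm_of_le (hB _)
  · exact (g z).continuous.comp (hF.comp (by fun_prop))

theorem scaleAverage_zero [CompleteSpace V] [CompleteSpace W] (F : E → V) (x : E) :
    scaleAverage g F 0 x = (∫ z, g z) (F x) := by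
  simp_rw [scaleAverage, zero_smul, sub_zero]
  exact (ContinuousLinearMap.integral_apply g.integrable (F x)).symm

theorem tendsto_scaleAverage_atTop [Nontrivial E] (hF : ContDiff ℝ ∞ F)
    (hsupp : Function.support F ⊆ Metric.closedBall 0 2) (x : E) :
    Tendsto (fun s => scaleAverage g F s x) atTop (𝓝 0) := by
  obtain ⟨A, hA⟩ := hF.continuous.bounded_above_of_compact_support
    (hasCompactSupport_of_support_subset_closedBall hsupp)
  obtain ⟨C, -, hC⟩ := exists_norm_iteratedFDeriv_scaleAverage_le_of_one_le (V := V) g 0 0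
  refine squeeze_zero_norm' (a := fun s : ℝ => C * A * s⁻¹ ^ Module.finrank ℝ E) ?_ ?_
  · filter_upwards [eventually_ge_atTop 1] with s hs
    simpa using hC F hF hsupp A hA s x hs
  · simpa [Module.finrank_pos.ne'] using
      (tendsto_inv_atTop_zero.pow (Module.finrank ℝ E)).const_mul (C * A)

end ScaleLimits

section Telescoping

theorem eq_of_hasSum_sub_succ {V : Type*} [AddCommGroup V] [TopologicalSpace V]
    [IsTopologicalAddGroup V] [T2Space V] {h : ℤ → V} {S a : V}
    (hsum : HasSum (fun m => h m - h (m + 1)) S)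
    (hbot : Tendsto (fun n : ℕ => h (-n)) atTop (𝓝 a))
    (htop : Tendsto (fun n : ℕ => h n) atTop (𝓝 0)) : S = a := by
  have hpartial : Tendsto (fun n : ℕ => h (-n) - h n) atTop (𝓝 S) :=
    (hsum.comp (Finset.tendsto_Ico_neg (R := ℤ))).congr fun n => Finset.sum_Ico_int_sub n h
  simpa using tendsto_nhds_unique hpartial (hbot.sub htop)

theorem div_add_pow_succ_le {s r : ℝ} (hs : 0 < s) (hr : 0 ≤ r) {q : ℕ} (hq : q ≠ 0) :
    s / (s + r) ^ (q + 1) ≤ 2 * (1 / (s + r) ^ q - 1 / (2 * s + r) ^ q) := by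
  obtain ⟨p, rfl⟩ := Nat.exists_eq_succ_of_ne_zero hq
  calc s / (s + r) ^ (p + 2)
      = 2 * (s / ((s + r) ^ (p + 1) * (2 * (s + r)))) := by field_simp; ring
    _ ≤ 2 * (s / ((s + r) ^ (p + 1) * (2 * s + r))) := by gcongr; linarith
    _ = 2 * (1 / (s + r) ^ (p + 1) - 1 / ((s + r) ^ p * (2 * s + r))) := by field_simp; ring
    _ ≤ 2 * (1 / (s + r) ^ (p + 1) - 1 / (2 * s + r) ^ (p + 1)) := by
        rw [pow_succ (2 * s + r)]; gcongr; linarith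

theorem hasSum_sub_dyadic {r : ℝ} (hr : 0 ≤ r) {q : ℕ} (hq : q ≠ 0) :
    HasSum (fun k : ℕ => 1 / ((2 : ℝ) ^ k + r) ^ q - 1 / (2 * 2 ^ k + r) ^ q)
      (1 / (1 + r) ^ q) := by
  have hk : ∀ k : ℕ, (0 : ℝ) < 2 ^ k := fun k => by positivity
  have hterm : ∀ k : ℕ, 1 / ((2 : ℝ) ^ k + r) ^ q - 1 / (2 * 2 ^ k + r) ^ q =
      1 / ((2 : ℝ) ^ k + r) ^ q - 1 / ((2 : ℝ) ^ (k + 1) + r) ^ q := fun k => by rw [pow_succ']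
  rw [hasSum_iff_tendsto_nat_of_nonneg fun k => sub_nonneg.2 (by gcongr; linarith [hk k])]
  have hlim : Tendsto (fun n : ℕ => 1 / ((2 : ℝ) ^ n + r) ^ q) atTop (𝓝 0) := by
    simpa only [one_div, Function.comp_def] using tendsto_inv_atTop_zero.comp
      ((tendsto_pow_atTop hq).comp (tendsto_atTop_add_const_right atTop r
        (tendsto_pow_atTop_atTop_of_one_lt (one_lt_two (α := ℝ)))))
  simp_rw [hterm, Finset.sum_range_sub', pow_zero]
  simpa using hlim.const_sub (1 / (1 + r) ^ q)

/-- The size at distance `r` from the origin, relative to the source, of the contribution of the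
length scale `2 ^ m` to a potential: concentrated at unit distance for small scales, spread over
the distance `2 ^ m` for large ones. -/
def dyadicWeight (q : ℕ) (r : ℝ) (m : ℤ) : ℝ := 2 ^ m / (max 1 (2 ^ m) + r) ^ q

theorem dyadicWeight_nonneg (q : ℕ) {r : ℝ} (hr : 0 ≤ r) (m : ℤ) : 0 ≤ dyadicWeight q r m := by
  unfold dyadicWeight; positivity

theorem dyadicWeight_le_dyadicWeight_zero (q : ℕ) {r : ℝ} (hr : 0 ≤ r) (m : ℤ) :
    dyadicWeight q r m ≤ dyadicWeight q 0 m := by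
  unfold dyadicWeight; gcongr

theorem hasSum_dyadicWeight_neg (q : ℕ) (r : ℝ) :
    HasSum (fun k : ℕ => dyadicWeight q r (-((k : ℤ) + 1))) (1 / (1 + r) ^ q) := by
  convert! (hasSum_geometric_two' 1).div_const ((1 + r) ^ q) using 2 with k
  have hpow : (2 : ℝ) ^ (-((k : ℤ) + 1)) = 1 / 2 / 2 ^ k := by
    rw [← Nat.cast_succ, zpow_neg, zpow_natCast, pow_succ]; field_simp
  rw [dyadicWeight, hpow, max_eq_left]
  rw [div_div, div_le_one (by positivity)]
  linarith [one_le_pow₀ (one_le_two (α := ℝ)) (n := k)]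

theorem dyadicWeight_natCast_le {q : ℕ} (hq : q ≠ 0) {r : ℝ} (hr : 0 ≤ r) (k : ℕ) :
    dyadicWeight (q + 1) r k ≤ 2 * (1 / ((2 : ℝ) ^ k + r) ^ q - 1 / (2 * 2 ^ k + r) ^ q) := by
  rw [dyadicWeight, zpow_natCast, max_eq_right (one_le_pow₀ one_le_two)]
  exact div_add_pow_succ_le (by positivity) hr hq

theorem summable_dyadicWeight_natCast {q : ℕ} (hq : q ≠ 0) {r : ℝ} (hr : 0 ≤ r) :
    Summable fun k : ℕ => dyadicWeight (q + 1) r k :=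
  .of_nonneg_of_le (fun k => dyadicWeight_nonneg _ hr k) (dyadicWeight_natCast_le hq hr)
    ((hasSum_sub_dyadic hr hq).summable.mul_left 2)

theorem summable_dyadicWeight {q : ℕ} (hq : q ≠ 0) {r : ℝ} (hr : 0 ≤ r) :
    Summable (dyadicWeight (q + 1) r) :=
  (summable_dyadicWeight_natCast hq hr).of_nat_of_neg_add_one
    (hasSum_dyadicWeight_neg (q + 1) r).summable

theorem tsum_dyadicWeight_le {q : ℕ} (hq : q ≠ 0) {r : ℝ} (hr : 0 ≤ r) :
    ∑' m, dyadicWeight (q + 1) r m ≤ 3 / (1 + r) ^ q := by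
  have hsumm := summable_dyadicWeight_natCast hq hr
  have hfine := hasSum_dyadicWeight_neg (q + 1) r
  have hcoarse := hasSum_le (dyadicWeight_natCast_le hq hr) hsumm.hasSum
    ((hasSum_sub_dyadic hr hq).mul_left 2)
  rw [tsum_of_nat_of_neg_add_one hsumm hfine.summable, hfine.tsum_eq]
  calc ∑' k : ℕ, dyadicWeight (q + 1) r k + 1 / (1 + r) ^ (q + 1)
      ≤ 2 * (1 / (1 + r) ^ q) + 1 / (1 + r) ^ q := by
        gcongr
        · linarith
        · exact q.le_succ
    _ = 3 / (1 + r) ^ q := by ring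

end Telescoping

section DyadicPotential

variable {E V : Type*} [NormedAddCommGroup E] [InnerProductSpace ℝ E] [FiniteDimensional ℝ E]
  [MeasurableSpace E] [BorelSpace E] [NormedAddCommGroup V] [NormedSpace ℝ V]

/-- The contribution of the length scale `s` to the potential of `F` with dyadic kernel `g`,
normalised to vanish at the origin: the contributions of large `s` need not be summable
otherwise. -/
def scalePotential (g : E → V →L[ℝ] V) (F : E → V) (s : ℝ) (x : E) : V :=
  s ^ 2 • (scaleAverage g F s x - scaleAverage g F s 0)

/-- The solution of `secondOrderOp 𝒜 u = F` vanishing at the origin, as the superposition over all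
dyadic length scales; `g` is the kernel of `exists_dyadic_kernel`. -/
def dyadicPotential (g : E → V →L[ℝ] V) (F : E → V) (x : E) : V :=
  ∑' m : ℤ, scalePotential g F (2 ^ m) x

variable (g : 𝓢(E, V →L[ℝ] V))

theorem contDiff_scalePotential {F : E → V} (hF : ContDiff ℝ ∞ F) (hc : HasCompactSupport F)
    (s : ℝ) : ContDiff ℝ ∞ (scalePotential g F s) :=
  ((contDiff_scaleAverage g hF hc s).sub contDiff_const).const_smul _

theorem norm_iteratedFDeriv_succ_scalePotential {F : E → V} (hF : ContDiff ℝ ∞ F)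
    (hc : HasCompactSupport F) (s : ℝ) (n : ℕ) (x : E) :
    ‖iteratedFDeriv ℝ (n + 1) (scalePotential g F s) x‖ =
      s ^ 2 * ‖iteratedFDeriv ℝ (n + 1) (scaleAverage g F s) x‖ := by
  have hsmooth := (contDiff_scaleAverage g hF hc s).of_le
    (mod_cast le_top : ((n + 1 : ℕ) : WithTop ℕ∞) ≤ ∞)
  unfold scalePotential
  rw [iteratedFDeriv_const_smul_apply' (hsmooth.sub contDiff_const).contDiffAt, norm_smul,
    fun_iteratedFDeriv_sub_apply hsmooth.contDiffAt contDiffAt_const,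
    iteratedFDeriv_const_of_ne n.succ_ne_zero, Pi.zero_apply, sub_zero, norm_pow,
    Real.norm_eq_abs, sq_abs]

theorem exists_norm_iteratedFDeriv_succ_scalePotential_le (n : ℕ) :
    ∃ C, 0 ≤ C ∧ ∀ F : E → V, ContDiff ℝ ∞ F → Function.support F ⊆ Metric.closedBall 0 2 →
      ∀ A, (∀ y, ‖F y‖ ≤ A) → (∀ y, ‖iteratedFDeriv ℝ (n + 1) F y‖ ≤ A) → ∀ s x, 0 < s →
        ‖iteratedFDeriv ℝ (n + 1) (scalePotential g F s) x‖ ≤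
          C * A * (s / (max 1 s + ‖x‖) ^ (Module.finrank ℝ E + n)) := by
  obtain ⟨C₁, hC₁⟩ := exists_norm_iteratedFDeriv_scaleAverage_le_of_le_one g (V := V)
    (Module.finrank ℝ E + n)
  obtain ⟨C₂, hC₂₀, hC₂⟩ := exists_norm_iteratedFDeriv_scaleAverage_le_of_one_le g (V := V)
    (Module.finrank ℝ E + n) (n + 1)
  refine ⟨max C₁ C₂, le_max_of_le_right hC₂₀, fun F hF hsupp A hA₀ hA s x hs => ?_⟩
  have hA_nonneg : 0 ≤ A := (norm_nonneg _).trans (hA₀ 0)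
  rw [norm_iteratedFDeriv_succ_scalePotential g hF
    (hasCompactSupport_of_support_subset_closedBall hsupp)]
  rcases le_total s 1 with hs₁ | hs₁
  · calc s ^ 2 * ‖iteratedFDeriv ℝ (n + 1) (scaleAverage g F s) x‖
        ≤ s * ‖iteratedFDeriv ℝ (n + 1) (scaleAverage g F s) x‖ := by
          gcongr; exact pow_le_of_le_one hs.le hs₁ two_ne_zero
      _ ≤ s * (C₁ * A / (1 + ‖x‖) ^ (Module.finrank ℝ E + n)) := by
          gcongr; exact hC₁ F hF hsupp _ A hA s x hs.le hs₁
      _ = C₁ * A * (s / (max 1 s + ‖x‖) ^ (Module.finrank ℝ E + n)) := by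
          rw [max_eq_left hs₁]; ring
      _ ≤ _ := by gcongr; exact le_max_left _ _
  · calc s ^ 2 * ‖iteratedFDeriv ℝ (n + 1) (scaleAverage g F s) x‖
        ≤ s ^ 2 * (C₂ * A * s⁻¹ ^ (Module.finrank ℝ E + (n + 1)) *
            (s / (s + ‖x‖)) ^ (Module.finrank ℝ E + n)) := by
          gcongr; exact hC₂ F hF hsupp A hA₀ s x hs₁
      _ = C₂ * A * (s / (s + ‖x‖) ^ (Module.finrank ℝ E + n)) := by
          rw [div_pow, inv_pow, ← add_assoc, pow_succ]; field_simp; ring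
      _ ≤ _ := by rw [max_eq_right hs₁]; gcongr; exact le_max_right _ _

theorem dyadicPotential_zero (F : E → V) : dyadicPotential g F 0 = 0 := by
  simp [dyadicPotential, scalePotential]

section

variable {F : E → V} (hF : ContDiff ℝ ∞ F) (hsupp : Function.support F ⊆ Metric.closedBall 0 2)
  (hE : 2 ≤ Module.finrank ℝ E)
include hF hsupp hE

theorem isDominatedSeries_scalePotential :
    IsDominatedSeries fun m : ℤ => scalePotential g F (2 ^ m) where
  contDiff _ :=
    contDiff_scalePotential g hF (hasCompactSupport_of_support_subset_closedBall hsupp) _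
  exists_summable := ⟨0, by simp [scalePotential, summable_zero]⟩
  exists_bound n := by
    obtain ⟨B, hB⟩ := exists_norm_iteratedFDeriv_le_of_hasCompactSupport hF
      (hasCompactSupport_of_support_subset_closedBall hsupp)
    obtain ⟨C, hC₀, hC⟩ := exists_norm_iteratedFDeriv_succ_scalePotential_le g n
    have hF₀ : ∀ y, ‖F y‖ ≤ max (B 0) (B (n + 1)) := fun y =>
      norm_iteratedFDeriv_zero.symm.trans_le ((hB 0 y).trans (le_max_left _ _))
    have hbound := hC F hF hsupp _ hF₀ fun y => (hB (n + 1) y).trans (le_max_right _ _)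
    have hA₀ := (norm_nonneg _).trans (hF₀ 0)
    obtain ⟨q, hq⟩ : ∃ q, Module.finrank ℝ E + n = q + 1 := ⟨_, (Nat.sub_add_cancel (by lia)).symm⟩
    rw [hq] at hbound
    exact ⟨_, (summable_dyadicWeight (by lia) le_rfl).mul_left _, fun m x =>
      (hbound (2 ^ m) x (by positivity)).trans (mul_le_mul_of_nonneg_left
        (dyadicWeight_le_dyadicWeight_zero (q + 1) (norm_nonneg x) m) (mul_nonneg hC₀ hA₀))⟩

theorem contDiff_dyadicPotential [CompleteSpace V] : ContDiff ℝ ∞ (dyadicPotential g F) :=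
  (isDominatedSeries_scalePotential g hF hsupp hE).contDiff_tsum

end

theorem exists_norm_iteratedFDeriv_succ_dyadicPotential_le [CompleteSpace V]
    (hE : 2 ≤ Module.finrank ℝ E) (n : ℕ) :
    ∃ C, ∀ F : E → V, ContDiff ℝ ∞ F → Function.support F ⊆ Metric.closedBall 0 2 →
      ∀ A, (∀ y, ‖F y‖ ≤ A) → (∀ y, ‖iteratedFDeriv ℝ (n + 1) F y‖ ≤ A) → ∀ x,
        ‖iteratedFDeriv ℝ (n + 1) (dyadicPotential g F) x‖ ≤
          C * A / (1 + ‖x‖) ^ (Module.finrank ℝ E + n - 1) := by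
  obtain ⟨C, hC₀, hC⟩ := exists_norm_iteratedFDeriv_succ_scalePotential_le g n
  refine ⟨3 * C, fun F hF hsupp A hA₀ hA x => ?_⟩
  have hA_nonneg : 0 ≤ A := (norm_nonneg _).trans (hA₀ 0)
  obtain ⟨q, hq⟩ : ∃ q, Module.finrank ℝ E + n = q + 1 := ⟨_, (Nat.sub_add_cancel (by lia)).symm⟩
  rw [hq, Nat.add_sub_cancel]
  have hsum := summable_dyadicWeight (q := q) (by lia) (norm_nonneg x)
  calc ‖iteratedFDeriv ℝ (n + 1) (dyadicPotential g F) x‖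
      ≤ C * A * ∑' m, dyadicWeight (q + 1) ‖x‖ m :=
        ((isDominatedSeries_scalePotential g hF hsupp hE).hasSum_iteratedFDeriv_succ n
          x).norm_le_of_bounded (hsum.hasSum.mul_left _) fun m =>
            hq ▸ hC F hF hsupp A hA₀ hA (2 ^ m) x (by positivity)
    _ ≤ C * A * (3 / (1 + ‖x‖) ^ q) := by
        gcongr; exact tsum_dyadicWeight_le (by lia) (norm_nonneg x)
    _ = 3 * C * A / (1 + ‖x‖) ^ q := by ring

end DyadicPotential

section DyadicPotentialSolves

variable {E V : Type*} [NormedAddCommGroup E] [InnerProductSpace ℝ E] [FiniteDimensional ℝ E]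
  [MeasurableSpace E] [BorelSpace E] [NormedAddCommGroup V] [NormedSpace ℝ V] [CompleteSpace V]
  {𝒜 : (E [×2]→L[ℝ] V) →L[ℝ] V} {g φ : 𝓢(E, V →L[ℝ] V)}
  (hg : ∀ v x, secondOrderOp 𝒜 (fun y => g y v) x =
    φ x v - (2 : ℝ)⁻¹ ^ Module.finrank ℝ E • φ ((2 : ℝ)⁻¹ • x) v)
  {F : E → V} (hF : ContDiff ℝ ∞ F)
include hg hF

theorem secondOrderOp_scaleAverage (hc : HasCompactSupport F) {s : ℝ} (hs : 0 < s) (x : E) :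
    secondOrderOp 𝒜 (scaleAverage g F s) x =
      s⁻¹ ^ 2 • (scaleAverage φ F s x - scaleAverage φ F (2 * s) x) := by
  have hdom := isDominatedFamily_smul_sub_apply g hF hc hs
  have hint : ∀ t : ℝ, Integrable fun y => φ (t⁻¹ • (x - y)) (F y) := fun t =>
    (Continuous.clm_apply (φ.continuous.comp (by fun_prop))
      hF.continuous).integrable_of_hasCompactSupport (hc.mono' fun y hy =>
        subset_closure fun h : F y = 0 => hy (by simp [h]))
  have hker : ∀ y, secondOrderOp 𝒜 (fun x => g (s⁻¹ • (x - y)) (F y)) x =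
      s⁻¹ ^ 2 • (φ (s⁻¹ • (x - y)) (F y) -
        (2 : ℝ)⁻¹ ^ Module.finrank ℝ E • φ ((2 * s)⁻¹ • (x - y)) (F y)) := fun y => by
    rw [secondOrderOp_comp_sub 𝒜 (fun w => g (s⁻¹ • w) (F y)),
      secondOrderOp_comp_smul (u := fun w => g w (F y)) ((g.smooth 2).clm_apply contDiff_const),
      hg, smul_smul, mul_inv]
  rw [funext (scaleAverage_eq_integral_sub g F hs),
    secondOrderOp_const_smul (contDiff_infty.1 hdom.contDiff_integral 2),
    secondOrderOp_integral hdom, integral_congr_ae (.of_forall hker), integral_smul,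
    integral_sub (hint s) ((hint (2 * s)).fun_smul _), integral_smul,
    scaleAverage_eq_integral_sub φ F hs,
    scaleAverage_eq_integral_sub φ F (by positivity : 0 < 2 * s), mul_inv, mul_pow,
    smul_comm, smul_sub (s⁻¹ ^ _), smul_smul _ _ (∫ _, _), mul_comm (2⁻¹ ^ _)]

theorem secondOrderOp_scalePotential (hc : HasCompactSupport F) {s : ℝ} (hs : 0 < s) (x : E) :
    secondOrderOp 𝒜 (scalePotential g F s) x =
      scaleAverage φ F s x - scaleAverage φ F (2 * s) x := by
  have hsmooth := contDiff_infty.1 (contDiff_scaleAverage g hF hc s) 2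
  unfold scalePotential
  rw [secondOrderOp_const_smul (hsmooth.sub contDiff_const), secondOrderOp,
    fun_iteratedFDeriv_sub_apply hsmooth.contDiffAt contDiffAt_const,
    iteratedFDeriv_const_of_ne two_ne_zero, Pi.zero_apply, sub_zero]
  rw [← secondOrderOp, secondOrderOp_scaleAverage hg hF hc hs, smul_smul, ← mul_pow,
    mul_inv_cancel₀ hs.ne', one_pow, one_smul]

theorem secondOrderOp_dyadicPotential (hφ : ∫ x, φ x = 1) (hE : 2 ≤ Module.finrank ℝ E)
    (hsupp : Function.support F ⊆ Metric.closedBall 0 2) :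
    secondOrderOp 𝒜 (dyadicPotential g F) = F := by
  funext x
  have hc := hasCompactSupport_of_support_subset_closedBall hsupp
  have : Nontrivial E := Module.nontrivial_of_finrank_pos (R := ℝ) (by lia)
  have htele : ∀ m : ℤ, secondOrderOp 𝒜 (scalePotential g F (2 ^ m)) x =
      scaleAverage φ F (2 ^ m) x - scaleAverage φ F (2 ^ (m + 1)) x := fun m => by
    rw [secondOrderOp_scalePotential hg hF hc (by positivity), ← zpow_one_add₀ two_ne_zero,
      add_comm]
  have hsum := hasSum_secondOrderOp_tsum (𝒜 := 𝒜) (isDominatedSeries_scalePotential g hF hsupp hE) x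
  simp_rw [htele] at hsum
  refine eq_of_hasSum_sub_succ hsum ?_ ?_
  · have hzero : Tendsto (fun n : ℕ => (2 : ℝ) ^ (-n : ℤ)) atTop (𝓝 0) := by
      simpa [← inv_pow] using tendsto_pow_atTop_nhds_zero_of_lt_one (r := (2 : ℝ)⁻¹)
        (by norm_num) (by norm_num)
    have hcont := (continuous_scaleAverage_scale φ hF.continuous hc x).tendsto 0
    rw [scaleAverage_zero, hφ, one_apply_eq_self] at hcont
    exact hcont.comp hzero
  · have hpow : Tendsto (fun n : ℕ => (2 : ℝ) ^ (n : ℤ)) atTop atTop := by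
      simpa using tendsto_pow_atTop_atTop_of_one_lt (one_lt_two (α := ℝ))
    exact (tendsto_scaleAverage_atTop φ hF hsupp x).comp hpow

end DyadicPotentialSolves

section CompactlySupportedSource

variable {E V : Type*} [NormedAddCommGroup E] [InnerProductSpace ℝ E] [FiniteDimensional ℝ E]
  [MeasurableSpace E] [BorelSpace E] [NormedAddCommGroup V] [NormedSpace ℝ V]
  [FiniteDimensional ℝ V] {𝒜 : (E [×2]→L[ℝ] V) →L[ℝ] V}

theorem exists_solution_of_support_subset_closedBall (h𝒜 : IsElliptic 𝒜)
    (hE : 2 ≤ Module.finrank ℝ E) :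
    ∃ C : ℕ → ℝ, ∀ R, 0 < R → ∀ F : E → V, ContDiff ℝ ∞ F →
      Function.support F ⊆ Metric.closedBall 0 (2 * R) →
      ∃ U : E → V, ContDiff ℝ ∞ U ∧ U 0 = 0 ∧ secondOrderOp 𝒜 U = F ∧
        ∀ n A, (∀ y, ‖F y‖ ≤ A) → (∀ y, ‖iteratedFDeriv ℝ (n + 1) F y‖ ≤ A / R ^ (n + 1)) →
          ∀ x, ‖iteratedFDeriv ℝ (n + 1) U x‖ ≤
            C n * A * R ^ Module.finrank ℝ E / (R + ‖x‖) ^ (Module.finrank ℝ E + n - 1) := by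
  have := FiniteDimensional.complete ℝ V
  obtain ⟨g, φ, hφ, hg⟩ := exists_dyadic_kernel h𝒜
  choose C hC using fun n => exists_norm_iteratedFDeriv_succ_dyadicPotential_le g hE n
  refine ⟨C, fun R hR F hF hsupp => ?_⟩
  have hG : ContDiff ℝ ∞ fun y => F (R • y) := hF.comp (contDiff_const_smul R)
  have hGsupp : Function.support (fun y => F (R • y)) ⊆ Metric.closedBall 0 2 := fun y hy => by
    have hmem := mem_closedBall_zero_iff.1 (hsupp hy)
    rw [norm_smul, Real.norm_of_nonneg hR.le, mul_comm] at hmem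
    exact mem_closedBall_zero_iff.2 (le_of_mul_le_mul_right hmem hR)
  have hu : ContDiff ℝ ∞ (dyadicPotential g fun y => F (R • y)) :=
    contDiff_dyadicPotential g hG hGsupp hE
  have hur : ContDiff ℝ ∞ fun x => dyadicPotential g (fun y => F (R • y)) (R⁻¹ • x) :=
    hu.comp (contDiff_const_smul R⁻¹)
  refine ⟨fun x => R ^ 2 • dyadicPotential g (fun y => F (R • y)) (R⁻¹ • x), hur.const_smul _,
    by simp [dyadicPotential_zero], funext fun x => ?_, fun n A hA₀ hA x => ?_⟩
  · rw [secondOrderOp_const_smul (contDiff_infty.1 hur 2), secondOrderOp_comp_smul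
      (contDiff_infty.1 hu 2), secondOrderOp_dyadicPotential hg hG hφ hE hGsupp, smul_smul,
      ← mul_pow, mul_inv_cancel₀ hR.ne', one_pow, one_smul]
    exact congrArg F (smul_inv_smul₀ hR.ne' x)
  · have hGA : ∀ y, ‖iteratedFDeriv ℝ (n + 1) (fun y => F (R • y)) y‖ ≤ A := fun y => by
      rw [norm_iteratedFDeriv_comp_smul hF, abs_of_pos hR]
      exact (le_div_iff₀' (by positivity)).1 (hA _)
    have hbound := hC n _ hG hGsupp A (fun y => hA₀ _) hGA (R⁻¹ • x)
    obtain ⟨q, hq⟩ : ∃ q, Module.finrank ℝ E = q + 1 := ⟨_, (Nat.sub_add_cancel (by lia)).symm⟩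
    rw [iteratedFDeriv_const_smul_apply' (contDiff_infty.1 hur _).contDiffAt, norm_smul,
      norm_iteratedFDeriv_comp_smul hu, Real.norm_of_nonneg (by positivity),
      abs_of_pos (inv_pos.2 hR)]
    rw [norm_smul, norm_inv, Real.norm_of_nonneg hR.le] at hbound
    calc R ^ 2 * (R⁻¹ ^ (n + 1) * ‖iteratedFDeriv ℝ (n + 1) (dyadicPotential g fun y => F (R • y))
            (R⁻¹ • x)‖)
        ≤ R ^ 2 * (R⁻¹ ^ (n + 1) * (C n * A / (1 + R⁻¹ * ‖x‖) ^
            (Module.finrank ℝ E + n - 1))) := by gcongr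
      _ = R ^ 2 * (R⁻¹ ^ (n + 1) * (C n * A / ((R + ‖x‖) / R) ^
            (Module.finrank ℝ E + n - 1))) := by
          congr 5; field_simp
      _ = C n * A * R ^ Module.finrank ℝ E / (R + ‖x‖) ^ (Module.finrank ℝ E + n - 1) := by
          rw [show Module.finrank ℝ E + n - 1 = q + n by lia, hq, div_pow, inv_pow]
          field_simp
          ring

end CompactlySupportedSource

section DyadicCutoff

variable {E : Type*} [NormedAddCommGroup E] [InnerProductSpace ℝ E]

/-- A smooth partition of unity subordinate to the ball of radius `2` (index `0`) and the dyadic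
annuli `2 ^ (k - 1) ≤ ‖x‖ ≤ 2 ^ (k + 1)` (index `k ≥ 1`). -/
def dyadicCutoff : ℕ → E → ℝ
  | 0, x => ballCutoff x
  | k + 1, x => annulusCutoff (((2 : ℝ) ^ (k + 1))⁻¹ • x)

theorem contDiff_dyadicCutoff : ∀ k, ContDiff ℝ ∞ (dyadicCutoff k : E → ℝ)
  | 0 => contDiff_ballCutoff
  | _ + 1 => contDiff_annulusCutoff.comp (contDiff_const_smul _)

theorem sum_range_succ_dyadicCutoff (n : ℕ) (x : E) :
    ∑ k ∈ Finset.range (n + 1), dyadicCutoff k x = ballCutoff (((2 : ℝ) ^ n)⁻¹ • x) := by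
  induction n with
  | zero => simp [dyadicCutoff]
  | succ n ih =>
    rw [Finset.sum_range_succ, ih, dyadicCutoff, annulusCutoff, smul_smul]
    have hhalf : (2 : ℝ) * (2 ^ (n + 1))⁻¹ = (2 ^ n)⁻¹ := by rw [pow_succ]; field_simp
    rw [hhalf, add_sub_cancel]

/-- The closed shell outside which `dyadicCutoff k` vanishes; the weight `‖x‖ + 2` is comparable
to `2 ^ k` on it, also for `k = 0`. -/
def dyadicShell (k : ℕ) : Set E := {x | 2 ^ k ≤ 2 * (‖x‖ + 2) ∧ ‖x‖ ≤ 2 * 2 ^ k}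

theorem support_dyadicCutoff_subset : ∀ k,
    Function.support (dyadicCutoff k : E → ℝ) ⊆ dyadicShell k
  | 0, x, hx => by
    have hnorm : ‖x‖ ≤ 2 := le_of_not_ge fun h => hx (ballCutoff_eq_zero h)
    constructor <;> linarith [norm_nonneg x, pow_zero (2 : ℝ)]
  | k + 1, x, hx => by
    have hpow : (0 : ℝ) < 2 ^ (k + 1) := by positivity
    have hnorm : ‖((2 : ℝ) ^ (k + 1))⁻¹ • x‖ = ‖x‖ / 2 ^ (k + 1) := by
      rw [norm_smul, norm_inv, Real.norm_of_nonneg hpow.le, inv_mul_eq_div]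
    have hlow : 1 / 2 < ‖x‖ / 2 ^ (k + 1) :=
      lt_of_not_ge fun h => hx (annulusCutoff_eq_zero_of_le (hnorm.trans_le h))
    have hup : ‖x‖ / 2 ^ (k + 1) < 2 :=
      lt_of_not_ge fun h => hx (annulusCutoff_eq_zero_of_ge (h.trans_eq hnorm.symm))
    rw [lt_div_iff₀ hpow] at hlow
    rw [div_lt_iff₀ hpow] at hup
    constructor <;> linarith

omit [InnerProductSpace ℝ E] in
theorem isClosed_dyadicShell (k : ℕ) : IsClosed (dyadicShell k : Set E) :=
  (isClosed_le continuous_const ((continuous_norm.add_const 2).const_mul 2)).inter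
    (isClosed_le continuous_norm continuous_const)

theorem hasSum_dyadicCutoff (x : E) : HasSum (fun k => dyadicCutoff k x) 1 := by
  obtain ⟨n, hn⟩ := pow_unbounded_of_one_lt ((‖x‖ + 2) * 2) (one_lt_two (α := ℝ))
  have hn' : ‖((2 : ℝ) ^ n)⁻¹ • x‖ ≤ 1 := by
    rw [norm_smul, norm_inv, Real.norm_of_nonneg (by positivity), inv_mul_le_one₀ (by positivity)]
    linarith [norm_nonneg x]
  rw [← ballCutoff_eq_one hn', ← sum_range_succ_dyadicCutoff]
  refine hasSum_sum_of_ne_finset_zero fun k hk => Function.notMem_support.1 fun hmem => ?_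
  have hshell := (support_dyadicCutoff_subset k hmem).1
  have hpow : (2 : ℝ) ^ n ≤ 2 ^ k :=
    pow_le_pow_right₀ one_le_two (by rw [Finset.mem_range] at hk; lia)
  linarith

theorem exists_norm_iteratedFDeriv_dyadicCutoff_le [FiniteDimensional ℝ E] :
    ∃ B : ℕ → ℝ, ∀ k n (x : E), ‖iteratedFDeriv ℝ n (dyadicCutoff k) x‖ ≤ B n / (2 ^ k) ^ n := by
  obtain ⟨B₀, hB₀⟩ := exists_norm_iteratedFDeriv_le_of_hasCompactSupport
    (contDiff_ballCutoff (E := E)) hasCompactSupport_ballCutoff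
  obtain ⟨B₁, hB₁⟩ := exists_norm_iteratedFDeriv_le_of_hasCompactSupport
    (contDiff_annulusCutoff (E := E)) hasCompactSupport_annulusCutoff
  refine ⟨fun n => max (B₀ n) (B₁ n), fun k n x => ?_⟩
  cases k with
  | zero =>
    change ‖iteratedFDeriv ℝ n ballCutoff x‖ ≤ _
    simpa using Or.inl (hB₀ n x)
  | succ k =>
    change ‖iteratedFDeriv ℝ n (fun x => annulusCutoff (((2 : ℝ) ^ (k + 1))⁻¹ • x)) x‖ ≤ _
    rw [norm_iteratedFDeriv_comp_smul contDiff_annulusCutoff, abs_of_pos (by positivity),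
      inv_pow, inv_mul_eq_div]
    gcongr
    exact (hB₁ n _).trans (le_max_right _ _)

end DyadicCutoff

section LogarithmicSum

theorem summable_add_one_pow_mul_half_pow (α : ℕ) :
    Summable fun k : ℕ => ((k : ℝ) + 1) ^ α * (1 / 2 : ℝ) ^ k := by
  have hshift := (summable_nat_add_iff 1).2
    (summable_pow_mul_geometric_of_norm_lt_one α (r := (1 / 2 : ℝ)) (by norm_num))
  refine (hshift.mul_left 2).congr fun k => ?_
  push_cast
  ring

theorem add_one_pow_div_le {q : ℕ} (hq : q ≠ 0) (α : ℕ) {r : ℝ} (hr : 0 ≤ r) {K : ℕ} (hK : K ≠ 0)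
    (hle : r + 2 ≤ 2 ^ (K + 1)) (l : ℕ) :
    (((l + K : ℕ) : ℝ) + 1) ^ α / (2 ^ (l + K) + r) ^ q ≤
      2 ^ q / (r + 2) ^ q * (2 * K) ^ α * (((l : ℝ) + 1) ^ α * (1 / 2) ^ l) := by
  have hK₁ : (1 : ℝ) ≤ K := by exact_mod_cast Nat.one_le_iff_ne_zero.2 hK
  have hnum : ((l + K : ℕ) : ℝ) + 1 ≤ 2 * K * (l + 1) := by
    push_cast
    nlinarith [(Nat.cast_nonneg l : (0 : ℝ) ≤ l)]
  have hden : (r + 2) / 2 * 2 ^ l ≤ 2 ^ (l + K) + r := by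
    calc (r + 2) / 2 * 2 ^ l ≤ 2 ^ (K + 1) / 2 * 2 ^ l := by gcongr
      _ = 2 ^ (l + K) := by ring
      _ ≤ 2 ^ (l + K) + r := le_add_of_nonneg_right hr
  calc (((l + K : ℕ) : ℝ) + 1) ^ α / (2 ^ (l + K) + r) ^ q
      ≤ (2 * K * ((l : ℝ) + 1)) ^ α / ((r + 2) / 2 * 2 ^ l) ^ q := by gcongr
    _ = 2 ^ q / (r + 2) ^ q * (2 * K) ^ α * (((l : ℝ) + 1) ^ α * (1 / (2 ^ l) ^ q)) := by
      rw [mul_pow _ ((l : ℝ) + 1), mul_pow ((r + 2) / 2), div_pow]; field_simp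
    _ ≤ 2 ^ q / (r + 2) ^ q * (2 * K) ^ α * (((l : ℝ) + 1) ^ α * (1 / 2) ^ l) := by
      rw [one_div_pow]
      gcongr
      exact le_self_pow₀ (one_le_pow₀ one_le_two) hq

theorem summable_add_one_pow_div {q : ℕ} (hq : q ≠ 0) (α : ℕ) {r : ℝ} (hr : 0 ≤ r) :
    Summable fun k : ℕ => ((k : ℝ) + 1) ^ α / (2 ^ k + r) ^ q := by
  obtain ⟨K, hK⟩ := pow_unbounded_of_one_lt (r + 2) (one_lt_two (α := ℝ))
  have hpow : r + 2 ≤ 2 ^ (K + 1 + 1) :=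
    hK.le.trans (pow_le_pow_right₀ one_le_two (K.le_add_right 2))
  exact (summable_nat_add_iff (K + 1)).1 (.of_nonneg_of_le (fun l => by positivity)
    (add_one_pow_div_le hq α hr K.succ_ne_zero hpow)
    ((summable_add_one_pow_mul_half_pow α).mul_left _))

theorem sum_range_add_one_pow_div_le (q α : ℕ) {r : ℝ} (hr : 0 ≤ r) (K : ℕ) :
    ∑ k ∈ Finset.range K, ((k : ℝ) + 1) ^ α / (2 ^ k + r) ^ q ≤
      2 ^ q / (r + 2) ^ q * K ^ (α + 1) := by
  have hterm : ∀ k ∈ Finset.range K, ((k : ℝ) + 1) ^ α / (2 ^ k + r) ^ q ≤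
      2 ^ q / (r + 2) ^ q * K ^ α := fun k hk => by
    have hk' : (k : ℝ) + 1 ≤ K := by exact_mod_cast Finset.mem_range.1 hk
    calc ((k : ℝ) + 1) ^ α / (2 ^ k + r) ^ q ≤ (K : ℝ) ^ α / ((r + 2) / 2) ^ q := by
          gcongr; linarith [one_le_pow₀ (one_le_two (α := ℝ)) (n := k)]
      _ = 2 ^ q / (r + 2) ^ q * K ^ α := by rw [div_pow]; field_simp
  refine (Finset.sum_le_sum hterm).trans_eq ?_
  rw [Finset.sum_const, Finset.card_range, nsmul_eq_mul]; ring

theorem exists_tsum_add_one_pow_div_le {q : ℕ} (hq : q ≠ 0) (α : ℕ) :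
    ∃ C, ∀ r : ℝ, 0 ≤ r → ∑' k : ℕ, ((k : ℝ) + 1) ^ α / (2 ^ k + r) ^ q ≤
      C * Real.log (r + 2) ^ (α + 1) / (r + 2) ^ q := by
  let S := ∑' l : ℕ, ((l : ℝ) + 1) ^ α * (1 / 2 : ℝ) ^ l
  refine ⟨2 ^ q * (1 + 2 ^ α * S) * 2 ^ (α + 1), fun r hr => ?_⟩
  obtain ⟨K, hK₁, hK₂⟩ := exists_nat_pow_near (x := r + 2) (y := 2) (by linarith) one_lt_two
  have hK₀ : K ≠ 0 := by rintro rfl; norm_num at hK₂; linarith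
  have hK_log : (K : ℝ) ≤ 2 * Real.log (r + 2) := by
    have hlog := Real.log_le_log (by positivity) hK₁
    rw [Real.log_pow] at hlog
    nlinarith [Real.log_two_gt_d9, (Nat.cast_nonneg K : (0 : ℝ) ≤ K)]
  have hsum := summable_add_one_pow_div hq α hr
  have htail : ∑' l : ℕ, (((l + K : ℕ) : ℝ) + 1) ^ α / (2 ^ (l + K) + r) ^ q ≤
      2 ^ q / (r + 2) ^ q * (2 * K) ^ α * S := by
    rw [← tsum_mul_left]
    exact ((summable_nat_add_iff K).2 hsum).tsum_le_tsum
      (add_one_pow_div_le hq α hr hK₀ hK₂.le) ((summable_add_one_pow_mul_half_pow α).mul_left _)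
  rw [← hsum.sum_add_tsum_nat_add K]
  calc _ ≤ 2 ^ q / (r + 2) ^ q * K ^ (α + 1) + 2 ^ q / (r + 2) ^ q * (2 * K) ^ α * S :=
        add_le_add (sum_range_add_one_pow_div_le q α hr K) htail
    _ ≤ 2 ^ q / (r + 2) ^ q * K ^ (α + 1) + 2 ^ q / (r + 2) ^ q * (2 ^ α * K ^ (α + 1)) * S := by
        rw [mul_pow]
        gcongr
        · exact_mod_cast Nat.one_le_iff_ne_zero.2 hK₀
        · exact α.le_succ
    _ = 2 ^ q / (r + 2) ^ q * (1 + 2 ^ α * S) * K ^ (α + 1) := by ring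
    _ ≤ 2 ^ q / (r + 2) ^ q * (1 + 2 ^ α * S) * (2 * Real.log (r + 2)) ^ (α + 1) := by gcongr
    _ = 2 ^ q * (1 + 2 ^ α * S) * 2 ^ (α + 1) * Real.log (r + 2) ^ (α + 1) / (r + 2) ^ q := by
        rw [mul_pow]; ring

end LogarithmicSum

section LogDecay

variable {E V W : Type*} [NormedAddCommGroup E] [NormedSpace ℝ E] [NormedAddCommGroup V]
  [NormedSpace ℝ V] [NormedAddCommGroup W] [NormedSpace ℝ W]

/-- `f` is smooth and its derivatives of order `n ≥ m` are
`O(log (‖x‖ + 2) ^ α * (‖x‖ + 2) ^ (-(P + n)))`. Sources have `m = 0`; solutions, whose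
undifferentiated size is not controlled, have `m = 1`. -/
structure HasLogDecay (m P α : ℕ) (f : E → V) : Prop where
  contDiff : ContDiff ℝ ∞ f
  exists_bound : ∀ n, m ≤ n →
    ∃ C, ∀ x, ‖iteratedFDeriv ℝ n f x‖ ≤ C * Real.log (‖x‖ + 2) ^ α / (‖x‖ + 2) ^ (P + n)

omit [NormedSpace ℝ E] in
theorem log_norm_add_two_pos (x : E) : 0 < Real.log (‖x‖ + 2) :=
  Real.log_pos (by linarith [norm_nonneg x])

namespace HasLogDecay

variable {m P α : ℕ} {f g : E → V}

theorem mono_order {k : ℕ} (hf : HasLogDecay m P α f) (hmk : m ≤ k) : HasLogDecay k P α f :=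
  ⟨hf.contDiff, fun n hn => hf.exists_bound n (hmk.trans hn)⟩

theorem exists_nonneg_bound (hf : HasLogDecay m P α f) {n : ℕ} (hn : m ≤ n) :
    ∃ C, 0 ≤ C ∧ ∀ x,
      ‖iteratedFDeriv ℝ n f x‖ ≤ C * Real.log (‖x‖ + 2) ^ α / (‖x‖ + 2) ^ (P + n) := by
  obtain ⟨C, hC⟩ := hf.exists_bound n hn
  have hpos : 0 < Real.log (‖(0 : E)‖ + 2) ^ α / (‖(0 : E)‖ + 2) ^ (P + n) :=
    div_pos (pow_pos (log_norm_add_two_pos _) α) (by positivity)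
  refine ⟨C, le_of_mul_le_mul_right ?_ hpos, hC⟩
  rw [zero_mul, ← mul_div_assoc]
  exact (norm_nonneg _).trans (hC 0)

theorem zero : HasLogDecay m P α (fun _ : E => (0 : V)) :=
  ⟨contDiff_const, fun n _ => ⟨0, fun x => by simp⟩⟩

theorem add (hf : HasLogDecay m P α f) (hg : HasLogDecay m P α g) :
    HasLogDecay m P α (fun x => f x + g x) where
  contDiff := hf.contDiff.add hg.contDiff
  exists_bound n hn := by
    obtain ⟨C, hC⟩ := hf.exists_bound n hn
    obtain ⟨D, hD⟩ := hg.exists_bound n hn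
    refine ⟨C + D, fun x => ?_⟩
    rw [fun_iteratedFDeriv_add_apply (contDiff_infty.1 hf.contDiff n).contDiffAt
      (contDiff_infty.1 hg.contDiff n).contDiffAt, add_mul, add_div]
    exact norm_add_le_of_le (hC x) (hD x)

theorem sum {ι : Type*} {s : Finset ι} {f : ι → E → V} (hf : ∀ i ∈ s, HasLogDecay m P α (f i)) :
    HasLogDecay m P α (fun x => ∑ i ∈ s, f i x) := by
  classical
  induction s using Finset.induction_on with
  | empty => simpa using zero
  | insert i s hi ih =>
    simp_rw [Finset.sum_insert hi]
    exact (hf i (s.mem_insert_self i)).add (ih fun j hj => hf j (Finset.mem_insert_of_mem hj))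

theorem clm_comp (hf : HasLogDecay m P α f) (L : V →L[ℝ] W) :
    HasLogDecay m P α (fun x => L (f x)) where
  contDiff := L.contDiff.comp hf.contDiff
  exists_bound n hn := by
    obtain ⟨C, hC⟩ := hf.exists_bound n hn
    refine ⟨‖L‖ * C, fun x => (norm_iteratedFDeriv_clm_comp_le hf.contDiff L n x).trans ?_⟩
    rw [mul_assoc, mul_div_assoc]
    exact mul_le_mul_of_nonneg_left (hC x) (norm_nonneg L)

theorem fderiv (hf : HasLogDecay (m + 1) P α f) : HasLogDecay m (P + 1) α (fderiv ℝ f) where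
  contDiff := hf.contDiff.fderiv_right le_rfl
  exists_bound n hn := by
    obtain ⟨C, hC⟩ := hf.exists_bound (n + 1) (by lia)
    refine ⟨C, fun x => ?_⟩
    rw [norm_iteratedFDeriv_fderiv, add_assoc, add_comm 1 n]
    exact hC x

theorem fderiv_apply (hf : HasLogDecay (m + 1) P α f) (v : E) :
    HasLogDecay m (P + 1) α (fun x => _root_.fderiv ℝ f x v) :=
  hf.fderiv.clm_comp (ContinuousLinearMap.apply ℝ V v)

end HasLogDecay

end LogDecay

section DyadicDecomposition

variable {E V : Type*} [NormedAddCommGroup E] [InnerProductSpace ℝ E] [NormedAddCommGroup V]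
  [NormedSpace ℝ V]

omit [InnerProductSpace ℝ E] in
theorem log_norm_add_two_le_of_mem_dyadicShell {k : ℕ} {x : E} (hx : x ∈ dyadicShell k) :
    Real.log (‖x‖ + 2) ≤ 2 * (k + 1) := by
  have hpow : ‖x‖ + 2 ≤ 2 ^ (k + 2) := by
    have := one_le_pow₀ (one_le_two (α := ℝ)) (n := k)
    rw [pow_add]
    linarith [hx.2]
  have hlog := Real.log_le_log (by positivity) hpow
  rw [Real.log_pow] at hlog
  push_cast at hlog
  nlinarith [Real.log_two_lt_d9, (Nat.cast_nonneg k : (0 : ℝ) ≤ k)]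

theorem HasLogDecay.exists_norm_iteratedFDeriv_le_of_mem_dyadicShell {P α : ℕ} {f : E → V}
    (hf : HasLogDecay 0 P α f) :
    ∃ K : ℕ → ℝ, ∀ k n, ∀ x ∈ dyadicShell k,
      ‖iteratedFDeriv ℝ n f x‖ ≤ K n * ((k : ℝ) + 1) ^ α / (2 ^ k) ^ P / (2 ^ k) ^ n := by
  choose C hC₀ hC using fun n : ℕ => hf.exists_nonneg_bound (Nat.zero_le n)
  refine ⟨fun n => C n * 2 ^ α * 2 ^ (P + n), fun k n x hx => ?_⟩
  have hlog := (log_norm_add_two_pos x).le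
  have hC₀n := hC₀ n
  calc ‖iteratedFDeriv ℝ n f x‖
      ≤ C n * Real.log (‖x‖ + 2) ^ α / (‖x‖ + 2) ^ (P + n) := hC n x
    _ ≤ C n * (2 * (k + 1)) ^ α / (2 ^ k / 2) ^ (P + n) := by
      gcongr
      · exact log_norm_add_two_le_of_mem_dyadicShell hx
      · linarith [hx.1]
    _ = C n * 2 ^ α * 2 ^ (P + n) * ((k : ℝ) + 1) ^ α / (2 ^ k) ^ P / (2 ^ k) ^ n := by
      rw [mul_pow, div_pow, pow_add (2 ^ k : ℝ)]
      field_simp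

theorem HasLogDecay.exists_norm_iteratedFDeriv_dyadicCutoff_smul_le [FiniteDimensional ℝ E]
    {P α : ℕ} {f : E → V} (hf : HasLogDecay 0 P α f) :
    ∃ K : ℕ → ℝ, ∀ k n x, ‖iteratedFDeriv ℝ n (fun y => dyadicCutoff k y • f y) x‖ ≤
      K n * ((k : ℝ) + 1) ^ α / (2 ^ k) ^ P / (2 ^ k) ^ n := by
  obtain ⟨B, hB⟩ := exists_norm_iteratedFDeriv_dyadicCutoff_le (E := E)
  obtain ⟨C, hC⟩ := hf.exists_norm_iteratedFDeriv_le_of_mem_dyadicShell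
  refine ⟨fun n => 2 ^ n * max 0 (partialSups B n) * max 0 (partialSups C n), fun k n x => ?_⟩
  by_cases hx : x ∈ dyadicShell k
  · have hcutoff : ∀ i ≤ n, ‖iteratedFDeriv ℝ i (dyadicCutoff k) x‖ ≤
        max 0 (partialSups B n) / (2 ^ k) ^ i := fun i hi =>
      (hB k i x).trans (by gcongr; exact (le_partialSups_of_le B hi).trans (le_max_right _ _))
    have hf_bound : ∀ i ≤ n, ‖iteratedFDeriv ℝ i f x‖ ≤
        max 0 (partialSups C n) * ((k : ℝ) + 1) ^ α / (2 ^ k) ^ P / (2 ^ k) ^ i := fun i hi =>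
      (hC k i x hx).trans
        (by gcongr; exact (le_partialSups_of_le C hi).trans (le_max_right _ _))
    refine (norm_iteratedFDeriv_smul_le_of_scale (contDiff_dyadicCutoff k) hf.contDiff
      hcutoff hf_bound).trans_eq ?_
    ring
  · have hsupp : Function.support (fun y => dyadicCutoff k y • f y) ⊆ dyadicShell k :=
      (Function.support_smul_subset_left _ _).trans (support_dyadicCutoff_subset k)
    have hzero : iteratedFDeriv ℝ n (fun y => dyadicCutoff k y • f y) x = 0 :=
      Function.notMem_support.1 fun h => hx
        (closure_minimal hsupp (isClosed_dyadicShell k) (support_iteratedFDeriv_subset n h))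
    rw [hzero, norm_zero]
    positivity

end DyadicDecomposition

section BaseSolution

variable {E V : Type*} [NormedAddCommGroup E] [InnerProductSpace ℝ E] [FiniteDimensional ℝ E]
  [MeasurableSpace E] [BorelSpace E] [NormedAddCommGroup V] [NormedSpace ℝ V]
  [FiniteDimensional ℝ V] {𝒜 : (E [×2]→L[ℝ] V) →L[ℝ] V}

theorem exists_dyadic_solutions (h𝒜 : IsElliptic 𝒜) (hE : 2 ≤ Module.finrank ℝ E) {α : ℕ}
    {f : E → V} (hf : HasLogDecay 0 (Module.finrank ℝ E) α f) :
    ∃ (U : ℕ → E → V) (C : ℕ → ℝ), (∀ k, ContDiff ℝ ∞ (U k)) ∧ (∀ k, U k 0 = 0) ∧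
      (∀ k, secondOrderOp 𝒜 (U k) = fun x => dyadicCutoff k x • f x) ∧
      ∀ n k x, ‖iteratedFDeriv ℝ (n + 1) (U k) x‖ ≤
        C n * (((k : ℝ) + 1) ^ α / (2 ^ k + ‖x‖) ^ (Module.finrank ℝ E + n - 1)) := by
  obtain ⟨C, hC⟩ := exists_solution_of_support_subset_closedBall h𝒜 hE
  obtain ⟨K, hK⟩ := hf.exists_norm_iteratedFDeriv_dyadicCutoff_smul_le
  have hsupp : ∀ k, Function.support (fun y => dyadicCutoff k y • f y) ⊆
      Metric.closedBall 0 (2 * 2 ^ k) := fun k x hx => mem_closedBall_zero_iff.2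
    (support_dyadicCutoff_subset k (Function.support_smul_subset_left _ _ hx)).2
  choose U hU hU₀ hUop hUC using fun k =>
    hC (2 ^ k) (by positivity) _ ((contDiff_dyadicCutoff k).smul hf.contDiff) (hsupp k)
  refine ⟨U, fun n => C n * max (K 0) (K (n + 1)), hU, hU₀, hUop, fun n k x => ?_⟩
  have hbound := hUC k n (max (K 0) (K (n + 1)) * ((k : ℝ) + 1) ^ α / (2 ^ k) ^ Module.finrank ℝ E)
    (fun y => ?_) (fun y => ?_) x
  · refine hbound.trans_eq ?_
    field_simp
  · have h₀ := hK k 0 y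
    rw [norm_iteratedFDeriv_zero, pow_zero, div_one] at h₀
    exact h₀.trans (by gcongr; exact le_max_left _ _)
  · exact (hK k (n + 1) y).trans (by gcongr; exact le_max_right _ _)

theorem exists_solution_of_hasLogDecay_finrank (h𝒜 : IsElliptic 𝒜)
    (hE : 2 ≤ Module.finrank ℝ E) {α : ℕ} {f : E → V}
    (hf : HasLogDecay 0 (Module.finrank ℝ E) α f) :
    ∃ U : E → V, HasLogDecay 1 (Module.finrank ℝ E - 2) (α + 1) U ∧ secondOrderOp 𝒜 U = f := by
  have := FiniteDimensional.complete ℝ V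
  obtain ⟨U, C, hU, hU₀, hUop, hUC⟩ := exists_dyadic_solutions h𝒜 hE hf
  have hdom : IsDominatedSeries U :=
    { contDiff := hU
      exists_summable := ⟨0, by simpa only [hU₀] using summable_zero⟩
      exists_bound := fun n => ⟨_, (summable_add_one_pow_div (q := Module.finrank ℝ E + n - 1)
        (by lia) α le_rfl).mul_left |C n|, fun k x => (hUC n k x).trans (by
          gcongr
          · exact le_abs_self _
          · exact norm_nonneg x)⟩ }
  refine ⟨fun x => ∑' k, U k x, ⟨hdom.contDiff_tsum, fun n hn => ?_⟩, funext fun x => ?_⟩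
  · obtain ⟨n, rfl⟩ := Nat.exists_eq_succ_of_ne_zero (Nat.one_le_iff_ne_zero.1 hn)
    obtain ⟨S, hS⟩ := exists_tsum_add_one_pow_div_le (q := Module.finrank ℝ E + n - 1) (by lia) α
    refine ⟨|C n| * S, fun x => ?_⟩
    have hsum := (summable_add_one_pow_div (q := Module.finrank ℝ E + n - 1) (by lia) α
      (norm_nonneg x)).hasSum
    rw [show Module.finrank ℝ E - 2 + (n + 1) = Module.finrank ℝ E + n - 1 by lia]
    calc ‖iteratedFDeriv ℝ (n + 1) (fun x => ∑' k, U k x) x‖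
        ≤ |C n| * ∑' k : ℕ, ((k : ℝ) + 1) ^ α / (2 ^ k + ‖x‖) ^ (Module.finrank ℝ E + n - 1) :=
          (hdom.hasSum_iteratedFDeriv_succ n x).norm_le_of_bounded (hsum.mul_left _) fun k =>
            (hUC n k x).trans (by gcongr; exact le_abs_self _)
      _ ≤ |C n| * (S * Real.log (‖x‖ + 2) ^ (α + 1) /
            (‖x‖ + 2) ^ (Module.finrank ℝ E + n - 1)) := by
          gcongr; exact hS _ (norm_nonneg x)
      _ = _ := by ring
  · have hop := hasSum_secondOrderOp_tsum (𝒜 := 𝒜) hdom x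
    simp_rw [hUop] at hop
    simpa using hop.unique ((hasSum_dyadicCutoff x).smul_const (f x))

end BaseSolution

section DirectionalDerivative

variable {E F : Type*} [NormedAddCommGroup E] [NormedSpace ℝ E] [NormedAddCommGroup F]
  [NormedSpace ℝ F]

theorem fderiv_fderiv_apply {f : E → F} (hf : ContDiff ℝ ∞ f) (v x : E) :
    fderiv ℝ (fun y => fderiv ℝ f y v) x = fderiv ℝ (fderiv ℝ f) x v := by
  have hdiff : DifferentiableAt ℝ (fderiv ℝ f) x :=
    (hf.fderiv_right (m := ∞) le_rfl).differentiable (by simp) x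
  ext w
  rw [fderiv_clm_apply hdiff (differentiableAt_const v)]
  simpa using ((contDiff_infty.1 hf 2).contDiffAt.isSymmSndFDerivAt (by simp)).eq w v

theorem iteratedFDeriv_fderiv_apply {f : E → F} (hf : ContDiff ℝ ∞ f) (n : ℕ) (v x : E) :
    iteratedFDeriv ℝ n (fun y => fderiv ℝ f y v) x = fderiv ℝ (iteratedFDeriv ℝ n f) x v := by
  induction n generalizing x with
  | zero =>
    exact (DFunLike.congr_fun (ContinuousLinearEquiv.comp_fderiv (f := f) (x := x)
      (continuousMultilinearCurryFin0 ℝ E F).symm.toContinuousLinearEquiv) v).symm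
  | succ n ih =>
    have hDn : ContDiff ℝ ∞ (iteratedFDeriv ℝ n f) := hf.iteratedFDeriv_right (mod_cast le_top)
    rw [iteratedFDeriv_succ_eq_comp_left, Function.comp_apply, funext ih, fderiv_fderiv_apply hDn,
      iteratedFDeriv_succ_eq_comp_left]
    exact (DFunLike.congr_fun (ContinuousLinearEquiv.comp_fderiv (𝕜 := ℝ)
      (E := E →L[ℝ] E [×n]→L[ℝ] F) (F := E [×(n + 1)]→L[ℝ] F)
      (f := fderiv ℝ (iteratedFDeriv ℝ n f)) (x := x)
      (continuousMultilinearCurryLeftEquiv ℝ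
        (fun _ : Fin (n + 1) => E) F).symm.toContinuousLinearEquiv) v).symm

theorem secondOrderOp_fderiv_apply {E F : Type*} [NormedAddCommGroup E] [InnerProductSpace ℝ E]
    [NormedAddCommGroup F] [NormedSpace ℝ F] {𝒜 : (E [×2]→L[ℝ] F) →L[ℝ] F} {u : E → F}
    (hu : ContDiff ℝ ∞ u) (v x : E) :
    secondOrderOp 𝒜 (fun y => fderiv ℝ u y v) x = fderiv ℝ (secondOrderOp 𝒜 u) x v := by
  have hD : DifferentiableAt ℝ (iteratedFDeriv ℝ 2 u) x :=
    (contDiff_infty.1 hu 3).differentiable_iteratedFDeriv (by norm_cast) x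
  have hop : HasFDerivAt (secondOrderOp 𝒜 u) (-(𝒜 ∘L fderiv ℝ (iteratedFDeriv ℝ 2 u) x)) x :=
    (𝒜.hasFDerivAt.comp x hD.hasFDerivAt).neg
  rw [hop.fderiv, secondOrderOp, iteratedFDeriv_fderiv_apply hu]
  rfl

end DirectionalDerivative

section ExteriorCutoff

variable {E V : Type*} [NormedAddCommGroup E] [InnerProductSpace ℝ E] [NormedAddCommGroup V]
  [NormedSpace ℝ V] {a b : ℝ}

/-- A smooth function vanishing on the ball of radius `a` and equal to `1` off the ball of radius
`b`. -/
def exteriorCutoff (ha : 0 < a) (hab : a < b) (x : E) : ℝ :=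
  1 - (⟨a, b, ha, hab⟩ : ContDiffBump (0 : E)) x

variable (ha : 0 < a) (hab : a < b)

theorem contDiff_exteriorCutoff : ContDiff ℝ ∞ (exteriorCutoff ha hab : E → ℝ) :=
  contDiff_const.sub (ContDiffBump.contDiff _)

theorem exteriorCutoff_eq_zero {x : E} (hx : ‖x‖ ≤ a) : exteriorCutoff ha hab x = 0 := by
  rw [exteriorCutoff, ContDiffBump.one_of_mem_closedBall _ (mem_closedBall_zero_iff.2 hx), sub_self]

theorem exteriorCutoff_eq_one {x : E} (hx : b ≤ ‖x‖) : exteriorCutoff ha hab x = 1 := by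
  rw [exteriorCutoff, ContDiffBump.zero_of_le_dist _ (by rwa [dist_zero_right]), sub_zero]

theorem HasLogDecay.of_forall_lt_norm [FiniteDimensional ℝ E] {m P α : ℕ} {f : E → V}
    (hf : ContDiff ℝ ∞ f) (R : ℝ)
    (hdecay : ∀ n, m ≤ n → ∃ C, ∀ x, R < ‖x‖ →
      ‖iteratedFDeriv ℝ n f x‖ ≤ C * Real.log (‖x‖ + 2) ^ α / (‖x‖ + 2) ^ (P + n)) :
    HasLogDecay m P α f where
  contDiff := hf
  exists_bound n hn := by
    have hlog := fun x : E => pow_pos (log_norm_add_two_pos x) α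
    have hcont : Continuous fun x : E =>
        ‖iteratedFDeriv ℝ n f x‖ * (‖x‖ + 2) ^ (P + n) / Real.log (‖x‖ + 2) ^ α :=
      ((hf.continuous_iteratedFDeriv (mod_cast le_top)).norm.mul (by fun_prop)).div
        (((continuous_norm.add_const 2).log fun x => by positivity).pow α) fun x => (hlog x).ne'
    obtain ⟨B, hB⟩ :=
      (isCompact_closedBall (0 : E) R).exists_bound_of_continuousOn hcont.continuousOn
    obtain ⟨C, hC⟩ := hdecay n hn
    refine ⟨max B C, fun x => ?_⟩
    have hlogx := hlog x
    rcases le_or_gt ‖x‖ R with hx | hx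
    · have hBx := (Real.le_norm_self _).trans (hB x (mem_closedBall_zero_iff.2 hx))
      rw [div_le_iff₀ hlogx] at hBx
      rw [le_div_iff₀ (by positivity)]
      exact hBx.trans (by gcongr; exact le_max_left B C)
    · exact (hC x hx).trans (by gcongr; exact le_max_right B C)

theorem hasLogDecay_exteriorCutoff [FiniteDimensional ℝ E] :
    HasLogDecay 0 0 0 (exteriorCutoff ha hab : E → ℝ) := by
  refine .of_forall_lt_norm (contDiff_exteriorCutoff ha hab) b fun n _ => ⟨1, fun x hx => ?_⟩
  have hone : exteriorCutoff ha hab =ᶠ[𝓝 x] fun _ => (1 : ℝ) := by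
    filter_upwards [(isOpen_lt continuous_const continuous_norm).mem_nhds hx] with y hy
    exact exteriorCutoff_eq_one ha hab (le_of_lt hy)
  rw [(hone.iteratedFDeriv ℝ n).eq_of_nhds]
  cases n with
  | zero => simp
  | succ n =>
    rw [iteratedFDeriv_succ_const, Pi.zero_apply, norm_zero]
    positivity

end ExteriorCutoff

section LinearWeight

variable {E F V : Type*} [NormedAddCommGroup E] [NormedSpace ℝ E] [NormedAddCommGroup F]
  [NormedSpace ℝ F] [NormedAddCommGroup V] [NormedSpace ℝ V]

theorem norm_iteratedFDeriv_clm_le (L : E →L[ℝ] F) (n : ℕ) {x : E} {w : ℝ} (hw : 0 < w)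
    (hx : ‖x‖ ≤ w) : ‖iteratedFDeriv ℝ n L x‖ ≤ ‖L‖ * w / w ^ n := by
  match n with
  | 0 =>
    rw [norm_iteratedFDeriv_zero, pow_zero, div_one]
    exact L.le_opNorm_of_le hx
  | 1 => rw [norm_iteratedFDeriv_one, L.fderiv, pow_one, mul_div_cancel_right₀ _ hw.ne']
  | n + 2 =>
    rw [← norm_iteratedFDeriv_fderiv, funext fun y => L.fderiv (x := y), iteratedFDeriv_succ_const,
      Pi.zero_apply, norm_zero]
    positivity

theorem HasLogDecay.clm_smul {P α : ℕ} {f : E → V} (hf : HasLogDecay 0 (P + 1) α f)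
    (L : E →L[ℝ] ℝ) : HasLogDecay 0 P α (fun x => L x • f x) where
  contDiff := L.contDiff.smul hf.contDiff
  exists_bound n _ := by
    choose C hC using fun n : ℕ => hf.exists_bound n n.zero_le
    refine ⟨2 ^ n * ‖L‖ * partialSups C n, fun x => ?_⟩
    have hw : 0 < ‖x‖ + 2 := by positivity
    have hlog := (log_norm_add_two_pos x).le
    have hf_bound : ∀ i ≤ n, ‖iteratedFDeriv ℝ i f x‖ ≤
        partialSups C n * Real.log (‖x‖ + 2) ^ α / (‖x‖ + 2) ^ (P + 1) / (‖x‖ + 2) ^ i := by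
      intro i hi
      rw [div_div, ← pow_add]
      exact (hC i x).trans (by gcongr; exact le_partialSups_of_le C hi)
    refine (norm_iteratedFDeriv_smul_le_of_scale L.contDiff hf.contDiff
      (fun i _ => norm_iteratedFDeriv_clm_le L i hw (by linarith)) hf_bound).trans_eq ?_
    rw [pow_add _ P n, pow_succ]
    field_simp

end LinearWeight

section RayIntegral

theorem log_pow_le_factorial_mul (α : ℕ) {s : ℝ} (hs : 1 ≤ s) :
    Real.log s ^ α ≤ α.factorial * s := by
  have h := Real.pow_div_factorial_le_exp _ (Real.log_nonneg hs) α
  rwa [Real.exp_log (by linarith), div_le_iff₀' (by positivity)] at h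

theorem integrableOn_one_add_log_pow_div_sq (α : ℕ) :
    IntegrableOn (fun t : ℝ => (1 + 2 * Real.log t) ^ α / t ^ 2) (Set.Ioi 1) := by
  refine ((integrableOn_Ioi_rpow_of_lt (a := -(3 / 2)) (by norm_num) one_pos).const_mul
    (4 ^ α * (α.factorial * Real.exp (1 / 4)))).mono'
    (Measurable.aestronglyMeasurable (by fun_prop)) ?_
  filter_upwards [ae_restrict_mem measurableSet_Ioi] with t ht
  have ht₀ : 0 < t := one_pos.trans ht
  have hlog := Real.log_nonneg (le_of_lt ht)
  have hexp : Real.exp (1 / 4 + Real.log t * (1 / 2)) = Real.exp (1 / 4) * t ^ (1 / 2 : ℝ) := by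
    rw [Real.exp_add, Real.rpow_def_of_pos ht₀]
  have hpow := Real.pow_div_factorial_le_exp (1 / 4 + Real.log t * (1 / 2)) (by positivity) α
  rw [hexp, div_le_iff₀' (by positivity)] at hpow
  have hrpow : t ^ (1 / 2 : ℝ) / t ^ 2 = t ^ (-(3 / 2) : ℝ) := by
    rw [← Real.rpow_natCast t 2, ← Real.rpow_sub ht₀]
    norm_num
  rw [Real.norm_of_nonneg (by positivity), ← hrpow, ← mul_div_assoc]
  gcongr
  calc (1 + 2 * Real.log t) ^ α = 4 ^ α * (1 / 4 + Real.log t * (1 / 2)) ^ α := by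
        rw [← mul_pow]; ring
    _ ≤ 4 ^ α * (α.factorial * (Real.exp (1 / 4) * t ^ (1 / 2 : ℝ))) := by gcongr
    _ = _ := by ring

variable {E V : Type*} [NormedAddCommGroup E] [InnerProductSpace ℝ E] [NormedAddCommGroup V]
  [NormedSpace ℝ V]

omit [InnerProductSpace ℝ E] in
theorem log_norm_smul_add_two_le [NormedSpace ℝ E] {t : ℝ} (ht : 1 ≤ t) (x : E) :
    Real.log (‖t • x‖ + 2) ≤ (1 + 2 * Real.log t) * Real.log (‖x‖ + 2) := by
  have hx := norm_nonneg x
  have hle : Real.log (‖t • x‖ + 2) ≤ Real.log (t * (‖x‖ + 2)) := by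
    refine Real.log_le_log (by positivity) ?_
    rw [norm_smul, Real.norm_of_nonneg (by linarith)]
    linarith
  rw [Real.log_mul (by positivity) (by positivity)] at hle
  have hlog₂ : Real.log 2 ≤ Real.log (‖x‖ + 2) := Real.log_le_log two_pos (by linarith)
  nlinarith [Real.log_two_gt_d9, Real.log_nonneg ht]

omit [InnerProductSpace ℝ E] in
theorem HasLogDecay.exists_norm_iteratedFDeriv_comp_smul_le [NormedSpace ℝ E] {P α : ℕ} {f : E → V}
    (hf : HasLogDecay 0 P α f) {r : ℝ} (hr : 0 < r) :
    ∃ K : ℕ → ℝ, ∀ n t x, 1 ≤ t → r ≤ ‖x‖ → ‖iteratedFDeriv ℝ n (fun y => f (t • y)) x‖ ≤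
      K n * ((1 + 2 * Real.log t) ^ α / t ^ P * (Real.log (‖x‖ + 2) ^ α / (‖x‖ + 2) ^ P)) /
        (‖x‖ + 2) ^ n := by
  choose C hC₀ hC using fun n : ℕ => hf.exists_nonneg_bound (Nat.zero_le n)
  refine ⟨fun n => C n * ((r + 2) / r) ^ (P + n), fun n t x ht hx => ?_⟩
  have hlog := Real.log_nonneg ht
  have hlogx := (log_norm_add_two_pos (t • x)).le
  have hnorm : r / (r + 2) * (t * (‖x‖ + 2)) ≤ ‖t • x‖ + 2 := by
    rw [norm_smul, Real.norm_of_nonneg (by linarith), div_mul_eq_mul_div,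
      div_le_iff₀ (by positivity)]
    nlinarith
  rw [norm_iteratedFDeriv_comp_smul hf.contDiff, abs_of_nonneg (by linarith)]
  have hC₀n := hC₀ n
  calc t ^ n * ‖iteratedFDeriv ℝ n f (t • x)‖
      ≤ t ^ n * (C n * Real.log (‖t • x‖ + 2) ^ α / (‖t • x‖ + 2) ^ (P + n)) := by
        gcongr
        exact hC n _
    _ ≤ t ^ n * (C n * ((1 + 2 * Real.log t) * Real.log (‖x‖ + 2)) ^ α /
          (r / (r + 2) * (t * (‖x‖ + 2))) ^ (P + n)) := by
        have := log_norm_add_two_pos x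
        gcongr
        exact log_norm_smul_add_two_le ht x
    _ = _ := by
        rw [mul_pow, mul_pow, mul_pow, pow_add t, pow_add (‖x‖ + 2), div_pow]
        beta_reduce
        rw [div_pow]
        field_simp

end RayIntegral

section RadialPrimitive

variable {E V : Type*} [NormedAddCommGroup E] [InnerProductSpace ℝ E] [FiniteDimensional ℝ E]
  [NormedAddCommGroup V] [NormedSpace ℝ V] {a b : ℝ} (ha : 0 < a) (hab : a < b)

/-- The integral of `t ^ k • f` along the ray issuing from `x`, cut off near the origin, where it is
singular. -/
def rayIntegral (k : ℕ) (f : E → V) (x : E) : V :=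
  ∫ t in Set.Ioi (1 : ℝ), exteriorCutoff ha hab x • t ^ k • f (t • x)

variable {P α k : ℕ} {f : E → V}

omit [FiniteDimensional ℝ E] in
include ha in
theorem HasLogDecay.exists_norm_iteratedFDeriv_pow_smul_comp_smul_le (hf : HasLogDecay 0 P α f)
    (hk : k + 2 ≤ P) :
    ∃ K : ℕ → ℝ, ∀ n t x, 1 ≤ t → a ≤ ‖x‖ →
      ‖iteratedFDeriv ℝ n (fun y => t ^ k • f (t • y)) x‖ ≤
        K n * ((1 + 2 * Real.log t) ^ α / t ^ 2 *
          (Real.log (‖x‖ + 2) ^ α / (‖x‖ + 2) ^ P)) / (‖x‖ + 2) ^ n := by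
  obtain ⟨K, hK⟩ := hf.exists_norm_iteratedFDeriv_comp_smul_le ha
  refine ⟨fun n => |K n|, fun n t x ht hx => ?_⟩
  have hlogt := Real.log_nonneg ht
  have hlogx := (log_norm_add_two_pos x).le
  have hsmooth : ContDiff ℝ ∞ fun y => f (t • y) := hf.contDiff.comp (contDiff_const_smul t)
  have hweight : t ^ k * ((1 + 2 * Real.log t) ^ α / t ^ P) ≤ (1 + 2 * Real.log t) ^ α / t ^ 2 := by
    rw [← mul_div_assoc, mul_comm, div_le_div_iff₀ (by positivity) (by positivity), mul_assoc,
      ← pow_add]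
    gcongr
  rw [iteratedFDeriv_const_smul_apply' (contDiff_infty.1 hsmooth n).contDiffAt, norm_smul,
    Real.norm_of_nonneg (by positivity)]
  calc t ^ k * ‖iteratedFDeriv ℝ n (fun y => f (t • y)) x‖
      ≤ t ^ k * (|K n| * ((1 + 2 * Real.log t) ^ α / t ^ P *
          (Real.log (‖x‖ + 2) ^ α / (‖x‖ + 2) ^ P)) / (‖x‖ + 2) ^ n) := by
        refine mul_le_mul_of_nonneg_left ((hK n t x ht hx).trans ?_) (by positivity)
        gcongr
        exact le_abs_self _
    _ = |K n| * (t ^ k * ((1 + 2 * Real.log t) ^ α / t ^ P) *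
          (Real.log (‖x‖ + 2) ^ α / (‖x‖ + 2) ^ P)) / (‖x‖ + 2) ^ n := by ring
    _ ≤ _ := by gcongr

theorem HasLogDecay.exists_norm_iteratedFDeriv_ray_le (hf : HasLogDecay 0 P α f) (hk : k + 2 ≤ P) :
    ∃ K : ℕ → ℝ, (∀ n, 0 ≤ K n) ∧ ∀ n t x, 1 ≤ t →
      ‖iteratedFDeriv ℝ n (fun y => exteriorCutoff ha hab y • t ^ k • f (t • y)) x‖ ≤
        (1 + 2 * Real.log t) ^ α / t ^ 2 *
          (K n * Real.log (‖x‖ + 2) ^ α / (‖x‖ + 2) ^ (P + n)) := by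
  obtain ⟨K, hK⟩ := hf.exists_norm_iteratedFDeriv_pow_smul_comp_smul_le ha hk
  choose B hB using fun n : ℕ =>
    (hasLogDecay_exteriorCutoff (E := E) ha hab).exists_bound n n.zero_le
  refine ⟨fun n => 2 ^ n * max 0 (partialSups B n) * max 0 (partialSups K n),
    fun n => by positivity, fun n t x ht => ?_⟩
  have hlogt := Real.log_nonneg ht
  have hlogx := (log_norm_add_two_pos x).le
  have hsmooth : ContDiff ℝ ∞ fun y => f (t • y) := hf.contDiff.comp (contDiff_const_smul t)
  rcases lt_or_ge ‖x‖ a with hx | hx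
  · have hzero : (fun y => exteriorCutoff ha hab y • t ^ k • f (t • y)) =ᶠ[𝓝 x] fun _ => 0 := by
      filter_upwards [(isOpen_lt continuous_norm continuous_const).mem_nhds hx] with y hy
      rw [exteriorCutoff_eq_zero ha hab (le_of_lt hy), zero_smul]
    rw [(hzero.iteratedFDeriv ℝ n).eq_of_nhds, iteratedFDeriv_fun_zero, Pi.zero_apply, norm_zero]
    positivity
  have hcutoff : ∀ i ≤ n, ‖iteratedFDeriv ℝ i (exteriorCutoff ha hab) x‖ ≤
      max 0 (partialSups B n) / (‖x‖ + 2) ^ i := fun i hi => by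
    have hBi := hB i x
    rw [pow_zero, mul_one, zero_add] at hBi
    exact hBi.trans (by gcongr; exact (le_partialSups_of_le B hi).trans (le_max_right _ _))
  have hray : ∀ i ≤ n, ‖iteratedFDeriv ℝ i (fun y => t ^ k • f (t • y)) x‖ ≤
      max 0 (partialSups K n) * ((1 + 2 * Real.log t) ^ α / t ^ 2 *
        (Real.log (‖x‖ + 2) ^ α / (‖x‖ + 2) ^ P)) / (‖x‖ + 2) ^ i := fun i hi => by
    refine (hK i t x ht hx).trans ?_
    gcongr
    exact (le_partialSups_of_le K hi).trans (le_max_right _ _)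
  refine (norm_iteratedFDeriv_smul_le_of_scale (contDiff_exteriorCutoff ha hab)
    (hsmooth.const_smul (t ^ k)) hcutoff hray).trans_eq ?_
  rw [pow_add]
  field_simp

theorem HasLogDecay.isDominatedFamily_ray (hf : HasLogDecay 0 P α f) (hk : k + 2 ≤ P) :
    IsDominatedFamily (fun (t : ℝ) x => exteriorCutoff ha hab x • t ^ k • f (t • x))
      (volume.restrict (Set.Ioi 1)) where
  contDiff_uncurry := ((contDiff_exteriorCutoff ha hab).comp contDiff_snd).smul
    ((contDiff_fst.pow k).smul (hf.contDiff.comp (contDiff_fst.smul contDiff_snd)))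
  exists_bound n := by
    obtain ⟨K, hK₀, hK⟩ := hf.exists_norm_iteratedFDeriv_ray_le ha hab hk
    refine ⟨_, (integrableOn_one_add_log_pow_div_sq α).mul_const (K n * α.factorial), ?_⟩
    filter_upwards [ae_restrict_mem measurableSet_Ioi] with t ht x
    have hlogt := Real.log_nonneg (le_of_lt ht)
    have hx : 1 ≤ ‖x‖ + 2 := by linarith [norm_nonneg x]
    have hKn := hK₀ n
    refine (hK n t x (le_of_lt ht)).trans (mul_le_mul_of_nonneg_left ?_ (by positivity))
    rw [div_le_iff₀ (by positivity), mul_assoc]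
    gcongr
    exact (log_pow_le_factorial_mul α hx).trans (by gcongr; exact le_self_pow₀ hx (by lia))

theorem hasLogDecay_rayIntegral (hf : HasLogDecay 0 P α f) (hk : k + 2 ≤ P) :
    HasLogDecay 0 P α (rayIntegral ha hab k f) where
  contDiff := (hf.isDominatedFamily_ray ha hab hk).contDiff_integral
  exists_bound n _ := by
    obtain ⟨K, -, hK⟩ := hf.exists_norm_iteratedFDeriv_ray_le ha hab hk
    have hweight := integrableOn_one_add_log_pow_div_sq α
    refine ⟨(∫ t in Set.Ioi (1 : ℝ), (1 + 2 * Real.log t) ^ α / t ^ 2) * K n, fun x => ?_⟩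
    refine ((hf.isDominatedFamily_ray ha hab hk).norm_iteratedFDeriv_integral_le n x).trans ?_
    rw [mul_assoc, mul_div_assoc, ← integral_mul_const]
    refine setIntegral_mono_on
      ((hf.isDominatedFamily_ray ha hab hk).integrable_iteratedFDeriv n x).norm
      (hweight.mul_const _) measurableSet_Ioi fun t ht => hK n t x (le_of_lt ht)

include ha hab in
theorem HasLogDecay.integrableOn_ray (hf : HasLogDecay 0 P α f) (hk : k + 2 ≤ P) {x : E}
    (hx : b ≤ ‖x‖) : IntegrableOn (fun t : ℝ => t ^ k • f (t • x)) (Set.Ioi 1) := by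
  have h := (hf.isDominatedFamily_ray ha hab hk).integrable_iteratedFDeriv 0 x
  have h' := (continuousMultilinearCurryFin0 ℝ E V).toContinuousLinearEquiv.integrable_comp_iff.2 h
  simpa [IntegrableOn, exteriorCutoff_eq_one ha hab hx] using h'

omit [FiniteDimensional ℝ E] in
theorem rayIntegral_eq {x : E} (hx : b ≤ ‖x‖) :
    rayIntegral ha hab k f x = ∫ t in Set.Ioi (1 : ℝ), t ^ k • f (t • x) := by
  simp only [rayIntegral, exteriorCutoff_eq_one ha hab hx, one_smul]

end RadialPrimitive

section DivergenceForm

variable {E V : Type*} [NormedAddCommGroup E] [NormedAddCommGroup V] [NormedSpace ℝ V]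

theorem pow_succ_smul_integral_ray [Module ℝ E] (k : ℕ) (f : E → V) {s : ℝ} (hs : 0 < s) (x : E) :
    s ^ (k + 1) • ∫ t in Set.Ioi (1 : ℝ), t ^ k • f (t • s • x) =
      ∫ t in Set.Ioi s, t ^ k • f (t • x) := by
  have h := integral_comp_mul_left_Ioi' (fun t : ℝ => t ^ k • f (t • x)) 1 hs
  rw [mul_one] at h
  rw [← h, pow_succ', mul_smul, ← integral_smul]
  simp_rw [mul_pow, smul_smul, mul_comm]

theorem hasDerivAt_integral_Ioi [CompleteSpace V] {g : ℝ → V} (hg : Continuous g) (s : ℝ)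
    (hint : IntegrableOn g (Set.Ioi s)) :
    HasDerivAt (fun r => ∫ t in Set.Ioi r, g t) (-g s) s := by
  have hloc : ∀ r, IntegrableOn g (Set.Ioi r) := fun r =>
    ((hg.integrableOn_Icc (a := r) (b := s)).union hint).mono_set fun t ht =>
      (le_or_gt t s).imp (fun hts => ⟨le_of_lt ht, hts⟩) id
  have hsplit : (fun r => ∫ t in Set.Ioi r, g t) =
      fun r => (∫ t in Set.Ioi s, g t) - ∫ t in s..r, g t := funext fun r => by
    rw [← intervalIntegral.integral_interval_add_Ioi (hloc s) (hloc r), add_sub_cancel_left]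
  rw [hsplit]
  exact (intervalIntegral.integral_hasDerivAt_right (hg.intervalIntegrable s s)
    (hg.stronglyMeasurableAtFilter _ _) hg.continuousAt).const_sub _

-- Differentiate `s ^ (k + 1) • h (s • x) = ∫ t in Ioi s, t ^ k • f (t • x)` at `s = 1`.
theorem smul_add_fderiv_eq_neg_of_eventuallyEq_integral_ray [NormedSpace ℝ E] [CompleteSpace V]
    {k : ℕ} {f h : E → V} (hf : Continuous f) {x : E} (hh : DifferentiableAt ℝ h x)
    (hint : IntegrableOn (fun t : ℝ => t ^ k • f (t • x)) (Set.Ioi 1))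
    (hray : ∀ᶠ y in 𝓝 x, h y = ∫ t in Set.Ioi (1 : ℝ), t ^ k • f (t • y)) :
    ((k + 1 : ℕ) : ℝ) • h x + fderiv ℝ h x x = -f x := by
  have hscale : (fun s : ℝ => s ^ (k + 1) • h (s • x)) =ᶠ[𝓝 1]
      fun s => ∫ t in Set.Ioi s, t ^ k • f (t • x) := by
    have hcont : Tendsto (fun s : ℝ => s • x) (𝓝 1) (𝓝 x) :=
      (by fun_prop : Continuous fun s : ℝ => s • x).tendsto' 1 x (one_smul ℝ x)
    filter_upwards [lt_mem_nhds one_pos, hcont.eventually hray] with s hs hsx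
    rw [hsx, pow_succ_smul_integral_ray k f hs]
  have hright := hasDerivAt_integral_Ioi (by fun_prop) 1 hint
  have hdil : HasDerivAt (fun s : ℝ => s • x) x 1 := by
    simpa using (hasDerivAt_id (1 : ℝ)).smul_const x
  have hcomp : HasDerivAt (fun s : ℝ => h (s • x)) (fderiv ℝ h x x) 1 :=
    HasFDerivAt.comp_hasDerivAt (1 : ℝ) (by simpa using hh.hasFDerivAt) hdil
  have hleft := (hasDerivAt_pow (k + 1) (1 : ℝ)).smul hcomp
  have := (hright.congr_of_eventuallyEq hscale).unique hleft
  simpa [add_comm] using this.symm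

theorem sum_fderiv_inner_smul {E : Type*} [NormedAddCommGroup E] [InnerProductSpace ℝ E]
    {ι : Type*} [Fintype ι] (e : OrthonormalBasis ι ℝ E) {h : E → V} {x : E}
    (hh : DifferentiableAt ℝ h x) :
    ∑ i, fderiv ℝ (fun y => innerSL ℝ (e i) y • h y) x (e i) =
      (Module.finrank ℝ E : ℝ) • h x + fderiv ℝ h x x := by
  have hterm : ∀ i, fderiv ℝ (fun y => innerSL ℝ (e i) y • h y) x (e i) =
      h x + fderiv ℝ h x (⟪e i, x⟫_ℝ • e i) := fun i => by
    rw [fderiv_fun_smul (innerSL ℝ (e i)).differentiableAt hh, (innerSL ℝ (e i)).fderiv]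
    simp [add_comm]
  simp_rw [hterm]
  rw [Finset.sum_add_distrib, ← map_sum, e.sum_repr', Finset.sum_const, Finset.card_univ,
    ← Module.finrank_eq_card_basis e.toBasis, Nat.cast_smul_eq_nsmul]

theorem exists_sum_fderiv_eq_of_hasLogDecay {E : Type*} [NormedAddCommGroup E]
    [InnerProductSpace ℝ E] [FiniteDimensional ℝ E] [CompleteSpace V] {ι : Type*} [Fintype ι]
    (e : OrthonormalBasis ι ℝ E) {P α : ℕ} (hE : 0 < Module.finrank ℝ E)
    (hP : Module.finrank ℝ E ≤ P) {f : E → V} (hf : HasLogDecay 0 (P + 1) α f) {r : ℝ}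
    (hr : 0 < r) :
    ∃ F : ι → E → V, (∀ i, HasLogDecay 0 P α (F i)) ∧
      ∀ x, r < ‖x‖ → ∑ i, fderiv ℝ (F i) x (e i) = f x := by
  obtain ⟨k, hk⟩ := Nat.exists_eq_add_one.2 hE
  set h := rayIntegral (half_pos hr) (half_lt_self hr) k f
  have hh : HasLogDecay 0 (P + 1) α h := hasLogDecay_rayIntegral _ _ hf (by lia)
  refine ⟨fun i x => -innerSL ℝ (e i) x • h x, fun i => hh.clm_smul (-innerSL ℝ (e i)),
    fun x hx => ?_⟩
  have hhx : DifferentiableAt ℝ h x := hh.contDiff.differentiable (by simp) x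
  have hray : ∀ᶠ y in 𝓝 x, h y = ∫ t in Set.Ioi (1 : ℝ), t ^ k • f (t • y) := by
    filter_upwards [(isOpen_lt continuous_const continuous_norm).mem_nhds hx] with y hy
    exact rayIntegral_eq _ _ (le_of_lt hy)
  have hradial := smul_add_fderiv_eq_neg_of_eventuallyEq_integral_ray hf.contDiff.continuous hhx
    (hf.integrableOn_ray (half_pos hr) (half_lt_self hr) (by lia) hx.le) hray
  rw [← hk, ← sum_fderiv_inner_smul e hhx] at hradial
  simp_rw [neg_smul, fderiv_fun_neg, neg_apply, Finset.sum_neg_distrib, hradial, neg_neg]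

end DivergenceForm

section HigherDecay

variable {E V : Type*} [NormedAddCommGroup E] [InnerProductSpace ℝ E] [FiniteDimensional ℝ E]
  [MeasurableSpace E] [BorelSpace E] [NormedAddCommGroup V] [NormedSpace ℝ V]
  [FiniteDimensional ℝ V] {𝒜 : (E [×2]→L[ℝ] V) →L[ℝ] V}

theorem exists_exterior_solution_of_hasLogDecay (h𝒜 : IsElliptic 𝒜) (hE : 2 ≤ Module.finrank ℝ E)
    {r : ℝ} (hr : 0 < r) {α p : ℕ} {f : E → V} (hf : HasLogDecay 0 (Module.finrank ℝ E + p) α f) :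
    ∃ U : E → V, HasLogDecay 1 (Module.finrank ℝ E + p - 2) (α + 1) U ∧
      ∀ x, r < ‖x‖ → secondOrderOp 𝒜 U x = f x := by
  induction p generalizing f with
  | zero =>
    obtain ⟨U, hU, hUop⟩ := exists_solution_of_hasLogDecay_finrank h𝒜 hE hf
    exact ⟨U, hU, fun x _ => congrFun hUop x⟩
  | succ p ih =>
    have := FiniteDimensional.complete ℝ V
    let e := stdOrthonormalBasis ℝ E
    obtain ⟨F, hF, hdiv⟩ :=
      exists_sum_fderiv_eq_of_hasLogDecay e (by lia) (Nat.le_add_right _ p) hf hr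
    choose W hW hWop using fun i => ih (hF i)
    refine ⟨fun x => ∑ i, fderiv ℝ (W i) x (e i), ?_, fun x hx => ?_⟩
    · rw [show Module.finrank ℝ E + (p + 1) - 2 = Module.finrank ℝ E + p - 2 + 1 by lia]
      exact .sum fun i _ => ((hW i).fderiv_apply (e i)).mono_order zero_le_one
    · rw [secondOrderOp_sum fun i _ => contDiff_infty.1 ((hW i).fderiv_apply (e i)).contDiff 2,
        ← hdiv x hx]
      refine Finset.sum_congr rfl fun i _ => ?_
      have heq : secondOrderOp 𝒜 (W i) =ᶠ[𝓝 x] F i := by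
        filter_upwards [(isOpen_lt continuous_const continuous_norm).mem_nhds hx] with y hy
        exact hWop i y hy
      rw [secondOrderOp_fderiv_apply (hW i).contDiff, heq.fderiv_eq]

end HigherDecay

section ExteriorDomain

variable {E V : Type*} [NormedAddCommGroup E] [NormedAddCommGroup V] [NormedSpace ℝ V]

-- The exterior domain contains, through each of its points, a half-space.
theorem uniqueDiffOn_le_norm [NormedSpace ℝ E] {r : ℝ} (hr : 0 < r) :
    UniqueDiffOn ℝ {x : E | r ≤ ‖x‖} := by
  intro x (hx : r ≤ ‖x‖)
  have hx0 : 0 < ‖x‖ := hr.trans_le hx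
  obtain ⟨ℓ, hℓ, hℓx⟩ := exists_dual_vector ℝ x hx0.ne'
  have hhalf : {y : E | ‖x‖ ≤ ℓ y} ⊆ {y | r ≤ ‖y‖} := fun y (hy : ‖x‖ ≤ ℓ y) => hx.trans <|
    hy.trans <| (Real.le_norm_self _).trans <| by simpa [hℓ] using ℓ.le_opNorm y
  have hopen : {y : E | ‖x‖ < ℓ y} ⊆ interior {y | ‖x‖ ≤ ℓ y} :=
    interior_maximal (fun y (hy : ‖x‖ < ℓ y) => hy.le) (isOpen_lt continuous_const ℓ.continuous)
  refine (uniqueDiffWithinAt_convex (convex_halfSpace_ge ℓ.toLinearMap.isLinear _)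
    ⟨(2 : ℝ) • x, hopen ?_⟩ (subset_closure ?_)).mono hhalf
  · simp [hℓx, two_mul, hx0]
  · simp [hℓx]

theorem exists_hasLogDecay_eq_of_le_norm [InnerProductSpace ℝ E] [FiniteDimensional ℝ E]
    {r R : ℝ} (hr : 0 < r) (hrR : r < R) {m P α : ℕ} {f : E → V}
    (hf : ContDiffOn ℝ ∞ f {x | r ≤ ‖x‖})
    (hdecay : ∀ n, m ≤ n → ∃ C, ∀ x, r ≤ ‖x‖ → ‖iteratedFDerivWithin ℝ n f {x | r ≤ ‖x‖} x‖ ≤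
      C * Real.log (‖x‖ + 2) ^ α / (‖x‖ + 2) ^ (P + n)) :
    ∃ F : E → V, HasLogDecay m P α F ∧ ∀ x, R ≤ ‖x‖ → F x = f x := by
  obtain ⟨a, hra, haR⟩ := exists_between hrR
  have ha : 0 < a := hr.trans hra
  have hnhds : ∀ x : E, r < ‖x‖ → {y : E | r ≤ ‖y‖} ∈ 𝓝 x := fun x hx =>
    mem_of_superset ((isOpen_lt continuous_const continuous_norm).mem_nhds hx)
      fun y (hy : r < ‖y‖) => hy.le
  have heq : ∀ x : E, R ≤ ‖x‖ → exteriorCutoff ha haR x • f x = f x := fun x hx => by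
    rw [exteriorCutoff_eq_one ha haR hx, one_smul]
  refine ⟨fun x => exteriorCutoff ha haR x • f x, .of_forall_lt_norm ?_ R fun n hn => ?_, heq⟩
  · refine contDiff_iff_contDiffAt.2 fun x => ?_
    rcases lt_or_ge ‖x‖ a with hx | hx
    · refine (contDiffAt_const (c := 0)).congr_of_eventuallyEq ?_
      filter_upwards [(isOpen_lt continuous_norm continuous_const).mem_nhds hx] with y hy
      rw [exteriorCutoff_eq_zero ha haR (le_of_lt hy), zero_smul]
    · exact (contDiff_exteriorCutoff ha haR).contDiffAt.smul
        (hf.contDiffAt (hnhds x (hra.trans_le hx)))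
  · obtain ⟨C, hC⟩ := hdecay n hn
    refine ⟨C, fun x hx => ?_⟩
    have hev : (fun y => exteriorCutoff ha haR y • f y) =ᶠ[𝓝 x] f := by
      filter_upwards [(isOpen_lt continuous_const continuous_norm).mem_nhds hx] with y hy
      exact heq y (le_of_lt hy)
    have hCx := hC x (hrR.trans hx).le
    rwa [iteratedFDerivWithin_congr_set (eventuallyEq_univ.2 (hnhds x (hrR.trans hx))),
      iteratedFDerivWithin_univ, ← (hev.iteratedFDeriv ℝ n).eq_of_nhds] at hCx

end ExteriorDomain

section Coordinates

/-- The identity of `ℝⁿ`, from the sup norm carried by `Vec n` to the Euclidean norm. -/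
def vecEquiv (n : ℕ) : Vec n ≃L[ℝ] EuclideanSpace ℝ (Fin n) :=
  (EuclideanSpace.equiv (Fin n) ℝ).symm

variable {d : ℕ}

@[simp]
theorem vecEquiv_apply (x : Vec d) (a : Fin d) : vecEquiv d x a = x a := rfl

theorem norm_vecEquiv (x : Vec d) : ‖vecEquiv d x‖ = enorm x := by
  simp [EuclideanSpace.norm_eq, enorm]

theorem enorm_vecEquiv_symm (x : EuclideanSpace ℝ (Fin d)) :
    enorm ((vecEquiv d).symm x) = ‖x‖ := by
  rw [← norm_vecEquiv, ContinuousLinearEquiv.apply_symm_apply]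

theorem ang_nonneg (x : Vec d) : 0 ≤ ang x := by
  rw [ang, ← norm_vecEquiv]
  positivity

theorem rpow_neg_natCast_sub_natCast {w : ℝ} (hw : 0 ≤ w) (P n : ℕ) :
    w ^ (-(P : ℝ) - n) = (w ^ (P + n))⁻¹ := by
  rw [← neg_add', ← Nat.cast_add, Real.rpow_neg hw, Real.rpow_natCast]

theorem vecEquiv_single (a : Fin d) :
    vecEquiv d (Pi.single a 1) = EuclideanSpace.basisFun (Fin d) ℝ a := by
  ext b
  simp [Pi.single_apply]

theorem vecEquiv_preimage_le_norm (r : ℝ) :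
    vecEquiv d ⁻¹' {x | r ≤ ‖x‖} = {x | r ≤ enorm x} := by
  ext x
  simp [norm_vecEquiv]

theorem iteratedFDerivWithin_comp_vecEquiv {V : Type*} [NormedAddCommGroup V] [NormedSpace ℝ V]
    {r : ℝ} (hr : 0 < r) {n : ℕ} {U : EuclideanSpace ℝ (Fin d) → V} (hU : ContDiff ℝ n U)
    {x : Vec d} (hx : r ≤ enorm x) :
    iteratedFDerivWithin ℝ n (U ∘ vecEquiv d) {x | r ≤ enorm x} x =
      (iteratedFDeriv ℝ n U (vecEquiv d x)).compContinuousLinearMap fun _ => vecEquiv d := by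
  have hmem : vecEquiv d x ∈ {y | r ≤ ‖y‖} := by rwa [Set.mem_ofPred_eq, norm_vecEquiv]
  rw [← vecEquiv_preimage_le_norm,
    (vecEquiv d).iteratedFDerivWithin_comp_right U (uniqueDiffOn_le_norm hr) hmem,
    iteratedFDerivWithin_eq_iteratedFDeriv (uniqueDiffOn_le_norm hr) hU.contDiffAt hmem]

theorem exists_hasLogDecay_eq_of_le_enorm {V : Type*} [NormedAddCommGroup V] [NormedSpace ℝ V]
    {r R : ℝ} (hr : 0 < r) (hrR : r < R) {m P α : ℕ} {f : Vec d → V}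
    (hf : ContDiffOn ℝ ∞ f {x | r ≤ enorm x})
    (hdecay : ∀ n : ℕ, m ≤ n → ∃ C, ∀ x, r ≤ enorm x →
      ‖iteratedFDerivWithin ℝ n f {x | r ≤ enorm x} x‖ ≤
        C * ang x ^ (-(P : ℝ) - n) * Real.log (ang x) ^ α) :
    ∃ F : EuclideanSpace ℝ (Fin d) → V, HasLogDecay m P α F ∧
      ∀ x, R ≤ enorm x → F (vecEquiv d x) = f x := by
  have hpre : (vecEquiv d).symm ⁻¹' {x | r ≤ enorm x} = {x | r ≤ ‖x‖} := by
    ext x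
    simp [enorm_vecEquiv_symm]
  have hf' : ContDiffOn ℝ ∞ (f ∘ (vecEquiv d).symm) {x | r ≤ ‖x‖} := by
    rw [← hpre]
    exact hf.comp_continuousLinearMap
      ((vecEquiv d).symm : EuclideanSpace ℝ (Fin d) →L[ℝ] Vec d)
  refine (exists_hasLogDecay_eq_of_le_norm hr hrR hf' fun n hn => ?_).imp fun F hF =>
    ⟨hF.1, fun x hx => ?_⟩
  · obtain ⟨C, hC⟩ := hdecay n hn
    refine ⟨C * ‖((vecEquiv d).symm : EuclideanSpace ℝ (Fin d) →L[ℝ] Vec d)‖ ^ n, fun x hx => ?_⟩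
    have hmem : (vecEquiv d).symm x ∈ {x | r ≤ enorm x} := by
      rwa [Set.mem_ofPred_eq, enorm_vecEquiv_symm]
    have hud : UniqueDiffOn ℝ {x : Vec d | r ≤ enorm x} := by
      rw [← vecEquiv_preimage_le_norm, ContinuousLinearEquiv.uniqueDiffOn_preimage_iff]
      exact uniqueDiffOn_le_norm hr
    have hang : ang ((vecEquiv d).symm x) = ‖x‖ + 2 := by rw [ang, enorm_vecEquiv_symm]
    have hCx := hC _ hmem
    rw [hang, rpow_neg_natCast_sub_natCast (by positivity)] at hCx
    rw [← hpre, (vecEquiv d).symm.iteratedFDerivWithin_comp_right f hud hmem]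
    refine (ContinuousMultilinearMap.norm_compContinuousLinearMap_le _ _).trans ?_
    rw [Finset.prod_const, Finset.card_univ, Fintype.card_fin]
    refine (mul_le_mul_of_nonneg_right hCx (by positivity)).trans_eq ?_
    ring
  · rw [hF.2 _ (by rwa [norm_vecEquiv]), Function.comp_apply,
      ContinuousLinearEquiv.symm_apply_apply]

theorem HasLogDecay.exists_norm_iteratedFDerivWithin_comp_vecEquiv_le {V : Type*}
    [NormedAddCommGroup V] [NormedSpace ℝ V] {r : ℝ} (hr : 0 < r) {m P α : ℕ}
    {U : EuclideanSpace ℝ (Fin d) → V} (hU : HasLogDecay m P α U) {n : ℕ} (hn : m ≤ n) :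
    ∃ K, ∀ x, r ≤ enorm x →
      ‖iteratedFDerivWithin ℝ n (U ∘ vecEquiv d) {y | r ≤ enorm y} x‖ ≤
        K * ang x ^ (-(P : ℝ) - n) * Real.log (ang x) ^ α := by
  obtain ⟨K, hK⟩ := hU.exists_bound n hn
  refine ⟨K * ‖(vecEquiv d : Vec d →L[ℝ] EuclideanSpace ℝ (Fin d))‖ ^ n, fun x hx => ?_⟩
  have hKx := hK (vecEquiv d x)
  rw [norm_vecEquiv, ← ang] at hKx
  rw [iteratedFDerivWithin_comp_vecEquiv hr (contDiff_infty.1 hU.contDiff n) hx,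
    rpow_neg_natCast_sub_natCast (ang_nonneg x)]
  refine (ContinuousMultilinearMap.norm_compContinuousLinearMap_le _ _).trans ?_
  rw [Finset.prod_const, Finset.card_univ, Fintype.card_fin]
  refine (mul_le_mul_of_nonneg_right hKx (by positivity)).trans_eq ?_
  ring

end Coordinates

section Elasticity

variable {d N : ℕ} (C : Fin N → Fin d → Fin N → Fin d → ℝ)

/-- The contraction `B ↦ (∑_{a,j,b} C_{iajb} B(e_a, e_b)_j)_i` of an elasticity tensor with a
Hessian; `secondOrderOp (elasticityContraction C)` is the operator `-div(C[∇u])`. -/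
def elasticityContraction : (EuclideanSpace ℝ (Fin d) [×2]→L[ℝ] Vec N) →L[ℝ] Vec N :=
  .pi fun i => ∑ a, ∑ j, ∑ b, C i a j b • ContinuousLinearMap.proj j ∘L
    ContinuousMultilinearMap.apply ℝ (fun _ : Fin 2 => EuclideanSpace ℝ (Fin d)) (Vec N)
      ![EuclideanSpace.basisFun (Fin d) ℝ a, EuclideanSpace.basisFun (Fin d) ℝ b]

theorem elasticityContraction_apply (B : EuclideanSpace ℝ (Fin d) [×2]→L[ℝ] Vec N) (i : Fin N) :
    elasticityContraction C B i = ∑ a, ∑ j, ∑ b, C i a j b *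
      B ![EuclideanSpace.basisFun (Fin d) ℝ a, EuclideanSpace.basisFun (Fin d) ℝ b] j := by
  simp [elasticityContraction]

theorem symbol_elasticityContraction (η : EuclideanSpace ℝ (Fin d)) (ξ : Vec N) (i : Fin N) :
    symbol (elasticityContraction C) η ξ i =
      ∑ a, ∑ j, ∑ b, C i a j b * η a * ξ j * η b := by
  simp only [symbol, ContinuousLinearMap.comp_apply, elasticityContraction_apply,
    planeWaveHessian_apply, Matrix.cons_val_zero, Matrix.cons_val_one, Pi.smul_apply, smul_eq_mul,
    real_inner_comm _ η, EuclideanSpace.basisFun_inner]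
  congr! 3
  ring

variable {C}

theorem isElliptic_elasticityContraction
    (hC : ∀ η : Vec d, η ≠ 0 → ∀ ξ : Vec N,
      (∀ i, ∑ a, ∑ j, ∑ b, C i a j b * η a * ξ j * η b = 0) → ξ = 0) :
    IsElliptic (elasticityContraction C) :=
  .of_injective fun η hη ξ hξ => hC ((vecEquiv d).symm η) (by simpa using hη) ξ fun i =>
    (symbol_elasticityContraction C η ξ i).symm.trans (congrFun hξ i)

theorem eq_zero_of_legendreHadamard {c : ℝ} (hc : 0 < c)
    (hLH : ∀ (ξ : Vec N) (η : Vec d), c * enorm ξ ^ 2 * enorm η ^ 2 ≤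
      ∑ i, ∑ a, ∑ j, ∑ b, C i a j b * ξ i * η a * ξ j * η b)
    (η : Vec d) (hη : η ≠ 0) (ξ : Vec N)
    (hξ : ∀ i, ∑ a, ∑ j, ∑ b, C i a j b * η a * ξ j * η b = 0) : ξ = 0 := by
  have hform : ∑ i, ∑ a, ∑ j, ∑ b, C i a j b * ξ i * η a * ξ j * η b =
      ∑ i, ξ i * ∑ a, ∑ j, ∑ b, C i a j b * η a * ξ j * η b := by
    simp_rw [Finset.mul_sum]
    congr! 4
    ring
  by_contra hne
  have hξpos : 0 < enorm ξ := by simpa [← norm_vecEquiv] using hne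
  have hηpos : 0 < enorm η := by simpa [← norm_vecEquiv] using hη
  have hle := hLH ξ η
  simp only [hform, hξ, mul_zero, Finset.sum_const_zero] at hle
  exact hle.not_gt (by positivity)

theorem iteratedFDerivWithin_two_comp_vecEquiv_single {r : ℝ} (hr : 0 < r)
    {U : EuclideanSpace ℝ (Fin d) → Vec N} (hU : ContDiff ℝ 2 U) {x : Vec d} (hx : r ≤ enorm x)
    (a : Fin d) (j : Fin N) (b : Fin d) :
    iteratedFDerivWithin ℝ 2 (fun y => U (vecEquiv d y) j) {y | r ≤ enorm y} x
        ![Pi.single a 1, Pi.single b 1] =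
      iteratedFDeriv ℝ 2 U (vecEquiv d x)
        ![EuclideanSpace.basisFun (Fin d) ℝ a, EuclideanSpace.basisFun (Fin d) ℝ b] j := by
  have hcoord : iteratedFDeriv ℝ 2 (fun y => U y j) (vecEquiv d x) =
      (ContinuousLinearMap.proj (R := ℝ) (φ := fun _ : Fin N => ℝ) j).compContinuousMultilinearMap
        (iteratedFDeriv ℝ 2 U (vecEquiv d x)) :=
    (ContinuousLinearMap.proj (R := ℝ) (φ := fun _ : Fin N => ℝ) j).iteratedFDeriv_comp_left
      hU.contDiffAt le_rfl
  have hbasis : (fun k : Fin 2 => vecEquiv d (![Pi.single a 1, Pi.single b 1] k)) =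
      ![EuclideanSpace.basisFun (Fin d) ℝ a, EuclideanSpace.basisFun (Fin d) ℝ b] := by
    ext k : 1
    fin_cases k <;> exact vecEquiv_single _
  have hcomp := iteratedFDerivWithin_comp_vecEquiv hr (contDiff_pi.1 hU j) hx
  rw [hcoord] at hcomp
  refine (DFunLike.congr_fun hcomp _).trans ?_
  rw [ContinuousMultilinearMap.compContinuousLinearMap_apply]
  exact congrArg (fun m => iteratedFDeriv ℝ 2 U (vecEquiv d x) m j) hbasis

theorem secondOrderOp_elasticityContraction_vecEquiv {r : ℝ} (hr : 0 < r)
    {U : EuclideanSpace ℝ (Fin d) → Vec N} (hU : ContDiff ℝ 2 U) {x : Vec d} (hx : r ≤ enorm x)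
    (i : Fin N) :
    secondOrderOp (elasticityContraction C) U (vecEquiv d x) i =
      -(∑ a, ∑ j, ∑ b, C i a j b *
        iteratedFDerivWithin ℝ 2 (fun y => U (vecEquiv d y) j) {y | r ≤ enorm y} x
          ![Pi.single a 1, Pi.single b 1]) := by
  simp_rw [secondOrderOp, Pi.neg_apply, elasticityContraction_apply,
    iteratedFDerivWithin_two_comp_vecEquiv_single hr hU hx]

end Elasticity

theorem exterior_solvability_linear_elasticity_general
    (d N : ℕ) (hd : 2 ≤ d)
    (CBt : Fin N → Fin d → Fin N → Fin d → ℝ)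
    (hell : ∀ η : Vec d, η ≠ 0 → ∀ ξ : Vec N,
      (∀ i, ∑ a, ∑ j, ∑ b, CBt i a j b * η a * ξ j * η b = 0) → ξ = 0)
    (p α : ℕ) (r R : ℝ) (hr : 0 < r) (hrR : r < R)
    (f : Vec d → Vec N)
    (hf : ContDiffOn ℝ ∞ f {x : Vec d | r ≤ enorm x})
    (hfb : ∀ j : ℕ, ∃ Cj : ℝ, ∀ x : Vec d, r ≤ enorm x →
      ‖iteratedFDerivWithin ℝ j f {y : Vec d | r ≤ enorm y} x‖ ≤
        Cj * ang x ^ (-(d : ℝ) - p - j) * Real.log (ang x) ^ α) :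
    ∃ u : Vec d → Vec N,
      ContDiffOn ℝ ∞ u {x : Vec d | R ≤ enorm x} ∧
      (∀ x : Vec d, R ≤ enorm x → ∀ i : Fin N,
        -(∑ a : Fin d, ∑ j : Fin N, ∑ b : Fin d, CBt i a j b *
            iteratedFDerivWithin ℝ 2 (fun y => u y j) {y : Vec d | R ≤ enorm y} x
              ![Pi.single a 1, Pi.single b 1]) = f x i) ∧
      (∀ j : ℕ, 1 ≤ j → ∃ Cj : ℝ, ∀ x : Vec d, R ≤ enorm x →
        ‖iteratedFDerivWithin ℝ j u {y : Vec d | R ≤ enorm y} x‖ ≤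
          Cj * ang x ^ ((2 : ℝ) - d - p - j) * Real.log (ang x) ^ (α + 1)) := by
  obtain ⟨F, hF, hFf⟩ := exists_hasLogDecay_eq_of_le_enorm (m := 0) (P := d + p) hr hrR hf
    fun j _ => by simpa only [Nat.cast_add, neg_add'] using hfb j
  have hE : Module.finrank ℝ (EuclideanSpace ℝ (Fin d)) = d := finrank_euclideanSpace_fin
  obtain ⟨U, hU, hUop⟩ := exists_exterior_solution_of_hasLogDecay
    (isElliptic_elasticityContraction hell) (by rwa [hE]) hr (by rwa [hE])
  rw [hE] at hU
  have hR : 0 < R := hr.trans hrR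
  refine ⟨U ∘ vecEquiv d, (hU.contDiff.comp (vecEquiv d).contDiff).contDiffOn, fun x hx i => ?_,
    fun j hj => ?_⟩
  · refine (secondOrderOp_elasticityContraction_vecEquiv hR (contDiff_infty.1 hU.contDiff 2)
      hx i).symm.trans ?_
    rw [hUop _ (by rw [norm_vecEquiv]; exact hrR.trans_le hx), hFf x hx]
  · rw [show (2 : ℝ) - d - p - j = -((d + p - 2 : ℕ) : ℝ) - j by
      rw [Nat.cast_sub (by lia)]; push_cast; ring]
    exact hU.exists_norm_iteratedFDerivWithin_comp_vecEquiv_le hR hj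

/-- Proposition: exterior solvability with decay for
continuum linear elasticity. -/
theorem exterior_solvability_linear_elasticity
    (d N : ℕ) (hd : 2 ≤ d) (hN : 1 ≤ N)
    (CBt : Fin N → Fin d → Fin N → Fin d → ℝ)
    (hCBsym : ∀ i a j b, CBt i a j b = CBt j b i a)
    (c₀ : ℝ) (hc₀ : 0 < c₀)
    (hLH : ∀ (ξ : Vec N) (η : Vec d),
      c₀ * (enorm ξ) ^ 2 * (enorm η) ^ 2 ≤
        ∑ i, ∑ a, ∑ j, ∑ b, CBt i a j b * ξ i * η a * ξ j * η b)
    (p α : ℕ) (R₀ : ℝ) (hR₀ : 0 < R₀)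
    (f : Vec d → Vec N)
    (hf : ContDiffOn ℝ (⊤ : ℕ∞) f {x : Vec d | R₀ / 2 ≤ enorm x})
    (hfb : ∀ j : ℕ, ∃ Cj : ℝ, ∀ x : Vec d, R₀ / 2 ≤ enorm x →
      ‖iteratedFDerivWithin ℝ j f {y : Vec d | R₀ / 2 ≤ enorm y} x‖ ≤
        Cj * ang x ^ (-(d : ℝ) - p - j) * Real.log (ang x) ^ α) :
    ∃ u : Vec d → Vec N,
      ContDiffOn ℝ (⊤ : ℕ∞) u {x : Vec d | R₀ ≤ enorm x} ∧
      (∀ x : Vec d, R₀ ≤ enorm x → ∀ i : Fin N,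
        -(∑ a : Fin d, ∑ j : Fin N, ∑ b : Fin d, CBt i a j b *
            iteratedFDerivWithin ℝ 2 (fun y => u y j) {y : Vec d | R₀ ≤ enorm y} x
              ![Pi.single a 1, Pi.single b 1]) = f x i) ∧
      (∀ j : ℕ, 1 ≤ j → ∃ Cj : ℝ, ∀ x : Vec d, R₀ ≤ enorm x →
        ‖iteratedFDerivWithin ℝ j u {y : Vec d | R₀ ≤ enorm y} x‖ ≤
          Cj * ang x ^ ((2 : ℝ) - d - p - j) * Real.log (ang x) ^ (α + 1)) :=
  exterior_solvability_linear_elasticity_general d N hd CBt (eq_zero_of_legendreHadamard hc₀ hLH)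
    p α (R₀ / 2) R₀ (half_pos hR₀) (half_lt_self hR₀) f hf hfb

end Defect
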